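/- Let q be odd, let Ω₀ ⊆ ℝ^{p+1} be a domain, and let f₀ ∈ C^ω(Ω₀, 𝔸) be real analytic. Then the partial even part PE[Δ_x^{(q−1)/2} CK[f₀]] and the partial odd part PO[Δ_x^{(q−1)/2} CK[f₀]] are each harmonic generalized partial-slice functions (elements of Harm(Ω, 𝔸) ∩ GS(Ω, 𝔸)) on a p-symmetric slice domain Ω in M with Ω₀ ⊂ Ω on which CK[f₀] is defined. -/

import Mathlib

open scoped BigOperators
open Filter Topology

namespace GPSM

variable (A : Type*) [NormedAddCommGroup A] [NormedSpace ℝ A] [Mul A] [One A]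

/-- `A` is a real alternative algebra with unit `1`, of finite dimension `d > 1`,
equipped with an anti-involution `conj` (a real-linear map with `(a^c)^c = a`,
`(ab)^c = b^c a^c`, fixing the reals).  The associator is alternating (left/right
alternative laws). -/
structure IsAltStarAlg (conj : A → A) : Prop where
  finDim : FiniteDimensional ℝ A
  one_lt_finrank : 1 < Module.finrank ℝ A
  mul_add' : ∀ a b c : A, a * (b + c) = a * b + a * c
  add_mul' : ∀ a b c : A, (a + b) * c = a * c + b * c
  smul_mul' : ∀ (r : ℝ) (a b : A), (r • a) * b = r • (a * b)
  mul_smul' : ∀ (r : ℝ) (a b : A), a * (r • b) = r • (a * b)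
  one_mul' : ∀ a : A, 1 * a = a
  mul_one' : ∀ a : A, a * 1 = a
  alt_left : ∀ a b : A, a * (a * b) = a * a * b
  alt_right : ∀ a b : A, a * b * b = a * (b * b)
  conj_add : ∀ a b : A, conj (a + b) = conj a + conj b
  conj_smul : ∀ (r : ℝ) (a : A), conj (r • a) = r • conj a
  conj_conj : ∀ a : A, conj (conj a) = a
  conj_mul : ∀ a b : A, conj (a * b) = conj b * conj a
  conj_one : conj 1 = 1

/-- `v 0, v 1, …, v m` is a hypercomplex basis of the hypercomplex subspace
`M = span(v 0, …, v m)` of `A`: `v 0 = 1`, `t(v s) = 0`, `n(v s) = 1`, the `v s`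
anticommute for distinct `s, t ∈ {1,…,m}`, they are linearly independent, and
`M` is contained in the quadratic cone `Q_A`. -/
structure IsHypBasis (conj : A → A) (v : ℕ → A) (m : ℕ) : Prop where
  v_zero : v 0 = 1
  trace_zero : ∀ s, 1 ≤ s → s ≤ m → v s + conj (v s) = 0
  norm_one : ∀ s, 1 ≤ s → s ≤ m → v s * conj (v s) = 1
  anticomm : ∀ s t, 1 ≤ s → s ≤ m → 1 ≤ t → t ≤ m → s ≠ t → v s * v t = -(v t * v s)
  indep : LinearIndependent ℝ (fun i : Fin (m + 1) => v i)
  mem_cone : ∀ x ∈ Submodule.span ℝ (Set.range fun i : Fin (m + 1) => v (i : ℕ)),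
      ∃ tr nr : ℝ, x + conj x = tr • (1 : A) ∧ x * conj x = nr • (1 : A) ∧
        ((∃ r : ℝ, x = r • (1 : A)) ∨ tr ^ 2 < 4 * nr)

variable {A}

/-- Identification of `ℝ^{m+1}` with the hypercomplex subspace `M`:
`(x_0,…,x_m) ↦ Σ x_s • v s`. -/
def emb (v : ℕ → A) (m : ℕ) (x : Fin (m + 1) → ℝ) : A :=
  ∑ s : Fin (m + 1), x s • v (s : ℕ)

/-- First `p+1` coordinates of a point of `M ≅ ℝ^{m+1}`, i.e. the `x_p`-part. -/
def projP (m p : ℕ) (x : Fin (m + 1) → ℝ) : Fin (p + 1) → ℝ := fun s =>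
  if h : (s : ℕ) < m + 1 then x ⟨(s : ℕ), h⟩ else 0

/-- Inclusion `ℝ^{p+1} ⊆ ℝ^{m+1}` (remaining coordinates `0`). -/
def injP (m p : ℕ) (y : Fin (p + 1) → ℝ) : Fin (m + 1) → ℝ := fun s =>
  if h : (s : ℕ) < p + 1 then y ⟨(s : ℕ), h⟩ else 0

/-- The coordinates of `x_q` (last `q = m - p` coordinates of `x`). -/
def xqpart (m p : ℕ) (x : Fin (m + 1) → ℝ) : Fin (m + 1) → ℝ := fun s =>
  if (s : ℕ) ≤ p then 0 else x s

/-- The coordinates of `x_p` inside `ℝ^{m+1}`. -/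
def xppart (m p : ℕ) (x : Fin (m + 1) → ℝ) : Fin (m + 1) → ℝ := fun s =>
  if (s : ℕ) ≤ p then x s else 0

/-- `r = |x_q|`. -/
noncomputable def rad (m p : ℕ) (x : Fin (m + 1) → ℝ) : ℝ :=
  Real.sqrt (∑ s : Fin (m + 1), (xqpart m p x s) ^ 2)

/-- `ω = x_q / |x_q|` (coordinates), `0` when `x_q = 0`. -/
noncomputable def normq (m p : ℕ) (x : Fin (m + 1) → ℝ) : Fin (m + 1) → ℝ :=
  (rad m p x)⁻¹ • xqpart m p x

/-- The reflection `x = x_p + x_q ↦ x_⋄ = x_p - x_q`. -/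
def reflP (m p : ℕ) (x : Fin (m + 1) → ℝ) : Fin (m + 1) → ℝ := fun s =>
  if (s : ℕ) ≤ p then x s else -x s

/-- The sphere `𝕊 = {x_q ∈ span(v_{p+1},…,v_m) : x_q² = -1}`, in coordinates. -/
def Sph (v : ℕ → A) (m p : ℕ) : Set (Fin (m + 1) → ℝ) :=
  {w | (∀ s : Fin (m + 1), (s : ℕ) ≤ p → w s = 0) ∧ emb v m w * emb v m w = -1}

/-- The point `x_p + r ω` of `M ≅ ℝ^{m+1}`. -/
def pt (m p : ℕ) (w : Fin (m + 1) → ℝ) (y : Fin (p + 1) → ℝ) (r : ℝ) :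
    Fin (m + 1) → ℝ :=
  injP m p y + r • w

/-- The slice `Ω_ω ⊆ ℝ^{p+2}` of `Ω` at `ω`. -/
def sliceSet (m p : ℕ) (Ω : Set (Fin (m + 1) → ℝ)) (w : Fin (m + 1) → ℝ) :
    Set ((Fin (p + 1) → ℝ) × ℝ) := {z | pt m p w z.1 z.2 ∈ Ω}

/-- The restriction `f_ω` of `f` to the slice at `ω`, as a function on `ℝ^{p+2}`. -/
def sliceFun (m p : ℕ) (f : (Fin (m + 1) → ℝ) → A) (w : Fin (m + 1) → ℝ) :
    (Fin (p + 1) → ℝ) × ℝ → A := fun z => f (pt m p w z.1 z.2)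

/-- Partial derivative `∂_{x_s}` of a function on `ℝ^{m+1}`. -/
noncomputable def pdF (m : ℕ) (s : Fin (m + 1)) (f : (Fin (m + 1) → ℝ) → A)
    (x : Fin (m + 1) → ℝ) : A := fderiv ℝ f x (Pi.single s 1)

/-- Partial derivative `∂_{x_s}` of a function on `ℝ^{p+1}`. -/
noncomputable def pdP (p : ℕ) (s : Fin (p + 1)) (g : (Fin (p + 1) → ℝ) → A)
    (y : Fin (p + 1) → ℝ) : A := fderiv ℝ g y (Pi.single s 1)

/-- Partial derivative `∂_{x_s}` of a function on `ℝ^{p+2} = ℝ^{p+1} × ℝ`. -/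
noncomputable def pdSx (p : ℕ) (s : Fin (p + 1)) (G : (Fin (p + 1) → ℝ) × ℝ → A)
    (z : (Fin (p + 1) → ℝ) × ℝ) : A := fderiv ℝ G z (Pi.single s 1, 0)

/-- Partial derivative `∂_r` of a function on `ℝ^{p+2} = ℝ^{p+1} × ℝ`. -/
noncomputable def pdSr (p : ℕ) (G : (Fin (p + 1) → ℝ) × ℝ → A)
    (z : (Fin (p + 1) → ℝ) × ℝ) : A := fderiv ℝ G z (0, 1)

/-- Second partial derivative `∂_r²`. -/
noncomputable def pdSr2 (p : ℕ) (G : (Fin (p + 1) → ℝ) × ℝ → A)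
    (z : (Fin (p + 1) → ℝ) × ℝ) : A := pdSr p (pdSr p G) z

/-- The operator `Σ_{lo ≤ s ≤ hi} v_s ∂_{x_s}` on functions on `ℝ^{m+1}`.
`Dop v m 0 p` is `D_{x_p}`, `Dop v m (p+1) m` is `D_{x_q}`, `Dop v m 0 m` is `D_x`. -/
noncomputable def Dop (v : ℕ → A) (m lo hi : ℕ) (f : (Fin (m + 1) → ℝ) → A)
    (x : Fin (m + 1) → ℝ) : A :=
  ∑ s : Fin (m + 1), if lo ≤ (s : ℕ) ∧ (s : ℕ) ≤ hi then v (s : ℕ) * pdF m s f x else 0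

/-- The conjugate operator `∂_{x_0} - Σ_{1 ≤ s ≤ hi} v_s ∂_{x_s}` on functions on
`ℝ^{m+1}`; `Dbarop v m p` is `D̄_{x_p}`, `Dbarop v m m` is `D̄_x`. -/
noncomputable def Dbarop (v : ℕ → A) (m hi : ℕ) (f : (Fin (m + 1) → ℝ) → A)
    (x : Fin (m + 1) → ℝ) : A :=
  pdF m 0 f x -
    ∑ s : Fin (m + 1), if 1 ≤ (s : ℕ) ∧ (s : ℕ) ≤ hi then v (s : ℕ) * pdF m s f x else 0

/-- The operator `D_{x_p} = Σ_{s=0}^p v_s ∂_{x_s}` on functions on `ℝ^{p+1}`. -/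
noncomputable def DopP (v : ℕ → A) (p : ℕ) (g : (Fin (p + 1) → ℝ) → A)
    (y : Fin (p + 1) → ℝ) : A :=
  ∑ s : Fin (p + 1), v (s : ℕ) * pdP p s g y

/-- The operator `D̄_{x_p} = ∂_{x_0} - Σ_{s=1}^p v_s ∂_{x_s}` on functions on `ℝ^{p+1}`. -/
noncomputable def DbaropP (v : ℕ → A) (p : ℕ) (g : (Fin (p + 1) → ℝ) → A)
    (y : Fin (p + 1) → ℝ) : A :=
  pdP p 0 g y - ∑ s : Fin (p + 1), if 1 ≤ (s : ℕ) then v (s : ℕ) * pdP p s g y else 0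

/-- The operator `D_{x_p}` on functions on `ℝ^{p+2} = ℝ^{p+1} × ℝ`. -/
noncomputable def DopSx (v : ℕ → A) (p : ℕ) (G : (Fin (p + 1) → ℝ) × ℝ → A)
    (z : (Fin (p + 1) → ℝ) × ℝ) : A :=
  ∑ s : Fin (p + 1), v (s : ℕ) * pdSx p s G z

/-- The operator `D̄_{x_p}` on functions on `ℝ^{p+2} = ℝ^{p+1} × ℝ`. -/
noncomputable def DbaropSx (v : ℕ → A) (p : ℕ) (G : (Fin (p + 1) → ℝ) × ℝ → A)
    (z : (Fin (p + 1) → ℝ) × ℝ) : A :=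
  pdSx p 0 G z - ∑ s : Fin (p + 1), if 1 ≤ (s : ℕ) then v (s : ℕ) * pdSx p s G z else 0

/-- The Laplacian `Δ_x` on functions on `ℝ^{m+1}`. -/
noncomputable def lapF (m : ℕ) (f : (Fin (m + 1) → ℝ) → A)
    (x : Fin (m + 1) → ℝ) : A :=
  ∑ s : Fin (m + 1), pdF m s (pdF m s f) x

/-- The Laplacian `Δ_{x_p}` on functions on `ℝ^{p+1}`. -/
noncomputable def lapP (p : ℕ) (g : (Fin (p + 1) → ℝ) → A)
    (y : Fin (p + 1) → ℝ) : A :=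
  ∑ s : Fin (p + 1), pdP p s (pdP p s g) y

/-- Iterated Laplacian `Δ_x^k`. -/
noncomputable def lapIterF (m k : ℕ) (f : (Fin (m + 1) → ℝ) → A) :
    (Fin (m + 1) → ℝ) → A :=
  (fun g => lapF m g)^[k] f

/-- Iterated Laplacian `Δ_{x_p}^k`. -/
noncomputable def lapIterP (p k : ℕ) (g : (Fin (p + 1) → ℝ) → A) :
    (Fin (p + 1) → ℝ) → A :=
  (fun h => lapP p h)^[k] g

/-- The Laplacian `Δ_{x'} = Δ_{x_p} + ∂_r²` on functions on `ℝ^{p+2}`. -/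
noncomputable def lapSx (p : ℕ) (G : (Fin (p + 1) → ℝ) × ℝ → A)
    (z : (Fin (p + 1) → ℝ) × ℝ) : A :=
  (∑ s : Fin (p + 1), pdSx p s (pdSx p s G) z) + pdSr2 p G z

/-- The slice Cauchy-Riemann operator `D_ω = D_{x_p} + ω ∂_r` applied to a function
on `ℝ^{p+2}`, where `ω` is given in coordinates by `w`. -/
noncomputable def DomCR (v : ℕ → A) (m p : ℕ) (w : Fin (m + 1) → ℝ)
    (G : (Fin (p + 1) → ℝ) × ℝ → A) (z : (Fin (p + 1) → ℝ) × ℝ) : A :=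
  DopSx v p G z + emb v m w * pdSr p G z

/-- `f` is left generalized partial-slice monogenic (of type `(p, m-p)`) on `Ω`. -/
def GSM (v : ℕ → A) (m p : ℕ) (f : (Fin (m + 1) → ℝ) → A)
    (Ω : Set (Fin (m + 1) → ℝ)) : Prop :=
  ∀ w ∈ Sph v m p, ContDiffOn ℝ 1 (sliceFun m p f w) (sliceSet m p Ω w) ∧
    ∀ z ∈ sliceSet m p Ω w, DomCR v m p w (sliceFun m p f w) z = 0

/-- `Ω` is partially symmetric with respect to `ℝ^{p+1}`. -/
def PSym (v : ℕ → A) (m p : ℕ) (Ω : Set (Fin (m + 1) → ℝ)) : Prop :=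
  ∀ x ∈ Ω, ∀ w ∈ Sph v m p, xppart m p x + rad m p x • w ∈ Ω

/-- `Ω` is a slice domain: a domain meeting `ℝ^{p+1}` all of whose slices are
domains in `ℝ^{p+2}`. -/
def SliceDomain (v : ℕ → A) (m p : ℕ) (Ω : Set (Fin (m + 1) → ℝ)) : Prop :=
  IsOpen Ω ∧ IsConnected Ω ∧ (∃ x ∈ Ω, xqpart m p x = 0) ∧
    ∀ w ∈ Sph v m p, IsConnected (sliceSet m p Ω w)

/-- The reflection `(x_p, r) ↦ (x_p, -r)` of `ℝ^{p+2}`. -/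
def reflD (p : ℕ) (z : (Fin (p + 1) → ℝ) × ℝ) : (Fin (p + 1) → ℝ) × ℝ := (z.1, -z.2)

/-- The p-symmetric completion `Ω_D ⊆ M` of `D ⊆ ℝ^{p+2}`. -/
def OmegaD (v : ℕ → A) (m p : ℕ) (D : Set ((Fin (p + 1) → ℝ) × ℝ)) :
    Set (Fin (m + 1) → ℝ) :=
  {x | ∃ w ∈ Sph v m p, ∃ z ∈ D, x = pt m p w z.1 z.2}

/-- `(F₁, F₂)` satisfies the even-odd (stem function) conditions on `D`. -/
def IsStem (p : ℕ) (D : Set ((Fin (p + 1) → ℝ) × ℝ))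
    (F₁ F₂ : (Fin (p + 1) → ℝ) × ℝ → A) : Prop :=
  ∀ z ∈ D, F₁ (reflD p z) = F₁ z ∧ F₂ (reflD p z) = -F₂ z

/-- `f` is the generalized partial-slice function induced by the stem `(F₁, F₂)`:
`f(x_p + rω) = F₁(x_p, r) + ω F₂(x_p, r)`. -/
def Induced (v : ℕ → A) (m p : ℕ) (D : Set ((Fin (p + 1) → ℝ) × ℝ))
    (F₁ F₂ : (Fin (p + 1) → ℝ) × ℝ → A) (f : (Fin (m + 1) → ℝ) → A) : Prop :=
  ∀ w ∈ Sph v m p, ∀ z ∈ D, f (pt m p w z.1 z.2) = F₁ z + emb v m w * F₂ z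

/-- The generalized Cauchy-Riemann system for the stem `(F₁, F₂)` on `D`. -/
def StemCR (v : ℕ → A) (p : ℕ) (D : Set ((Fin (p + 1) → ℝ) × ℝ))
    (F₁ F₂ : (Fin (p + 1) → ℝ) × ℝ → A) : Prop :=
  ∀ z ∈ D, DopSx v p F₁ z - pdSr p F₂ z = 0 ∧ DbaropSx v p F₂ z + pdSr p F₁ z = 0

/-- `f` is generalized partial-slice regular on `Ω_D`. -/
def MemGSR (v : ℕ → A) (m p : ℕ) (D : Set ((Fin (p + 1) → ℝ) × ℝ))
    (f : (Fin (m + 1) → ℝ) → A) : Prop :=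
  ∃ F₁ F₂ : (Fin (p + 1) → ℝ) × ℝ → A, IsStem p D F₁ F₂ ∧
    ContDiffOn ℝ 1 F₁ D ∧ ContDiffOn ℝ 1 F₂ D ∧
    Induced v m p D F₁ F₂ f ∧ StemCR v p D F₁ F₂

/-- `f` is a generalized partial-slice function on `Ω`. -/
def MemGS (v : ℕ → A) (m p : ℕ) (Ω : Set (Fin (m + 1) → ℝ))
    (f : (Fin (m + 1) → ℝ) → A) : Prop :=
  ∃ F₁ F₂ : (Fin (p + 1) → ℝ) × ℝ → A,
    (∀ z : (Fin (p + 1) → ℝ) × ℝ, F₁ (reflD p z) = F₁ z ∧ F₂ (reflD p z) = -F₂ z) ∧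
    ∀ x ∈ Ω, f x = F₁ (projP m p x, rad m p x) +
      emb v m (normq m p x) * F₂ (projP m p x, rad m p x)

/-- Non-associative power: `a^n` with products taken from the right. -/
def apow (a : A) (n : ℕ) : A := (fun b => a * b)^[n] 1

/-- Partial even part `PE[f](x) = (f(x) + f(x_⋄))/2`. -/
noncomputable def PE (m p : ℕ) (f : (Fin (m + 1) → ℝ) → A)
    (x : Fin (m + 1) → ℝ) : A := (2 : ℝ)⁻¹ • (f x + f (reflP m p x))

/-- Partial odd part `PO[f](x) = (f(x) - f(x_⋄))/2`. -/
noncomputable def PO (m p : ℕ) (f : (Fin (m + 1) → ℝ) → A)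
    (x : Fin (m + 1) → ℝ) : A := (2 : ℝ)⁻¹ • (f x - f (reflP m p x))

/-- `Ω₀* = {x_p + x_q : x_p ∈ Ω₀, x_q ∈ ℝ^q}`. -/
def Omega0star (m p : ℕ) (Ω₀ : Set (Fin (p + 1) → ℝ)) : Set (Fin (m + 1) → ℝ) :=
  {x | projP m p x ∈ Ω₀}

/-- The spherical derivative `f'_s(x) = (1/2) x_q⁻¹ (f(x) - f(x_⋄))`
(using `x_q⁻¹ = -x_q/|x_q|²`). -/
noncomputable def sder (v : ℕ → A) (m p : ℕ) (f : (Fin (m + 1) → ℝ) → A)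
    (x : Fin (m + 1) → ℝ) : A :=
  -(((2 : ℝ) * rad m p x ^ 2)⁻¹) • (emb v m (xqpart m p x) * (f x - f (reflP m p x)))

/-- The spherical Dirac operator
`Γ f = -(1/2) Σ_{p+1 ≤ i,j ≤ m} v_i (v_j (L_{ij} f))`. -/
noncomputable def sphericalGamma (v : ℕ → A) (m p : ℕ) (f : (Fin (m + 1) → ℝ) → A)
    (x : Fin (m + 1) → ℝ) : A :=
  -((2 : ℝ)⁻¹) • ∑ i : Fin (m + 1), ∑ j : Fin (m + 1),
    if p < (i : ℕ) ∧ p < (j : ℕ) then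
      v (i : ℕ) * (v (j : ℕ) * (x i • pdF m j f x - x j • pdF m i f x)) else 0

/-- The slice Cauchy-Riemann operator `D_ω` applied to (the slice restriction of) a
function `f` on `M`, at the point `x` (with `ω = x_q/|x_q|`). -/
noncomputable def DomCRat (v : ℕ → A) (m p : ℕ) (f : (Fin (m + 1) → ℝ) → A)
    (x : Fin (m + 1) → ℝ) : A :=
  DomCR v m p (normq m p x) (sliceFun m p f (normq m p x)) (projP m p x, rad m p x)

/-- `f` is left monogenic on `Ω`: `f ∈ C¹` and `D_x f = 0`. -/
def Monogenic (v : ℕ → A) (m : ℕ) (f : (Fin (m + 1) → ℝ) → A)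
    (Ω : Set (Fin (m + 1) → ℝ)) : Prop :=
  ContDiffOn ℝ 1 f Ω ∧ ∀ x ∈ Ω, Dop v m 0 m f x = 0

/-- `f` is harmonic on `Ω`: `f ∈ C²` and `Δ_x f = 0`. -/
def Harmonic (m : ℕ) (f : (Fin (m + 1) → ℝ) → A)
    (Ω : Set (Fin (m + 1) → ℝ)) : Prop :=
  ContDiffOn ℝ 2 f Ω ∧ ∀ x ∈ Ω, lapF m f x = 0

/-- A family of functions converges normally (locally a summable uniform bound). -/
def NormallyConvOn {E F : Type*} [TopologicalSpace E] [NormedAddCommGroup F]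
    (u : ℕ → E → F) (s : Set E) : Prop :=
  ∀ x ∈ s, ∃ U ∈ nhds x, ∃ c : ℕ → ℝ, Summable c ∧ ∀ k : ℕ, ∀ y ∈ U, ‖u k y‖ ≤ c k

/-- The generalized partial-slice CK-extension
`CK[f₀](x) = Σ_k (r^{2k}/(2k)!)(-Δ_{x_p})^k f₀(x_p)
  + ω Σ_k (r^{2k+1}/(2k+1)!)(-Δ_{x_p})^k (D_{x_p} f₀)(x_p)`. -/
noncomputable def CKe (v : ℕ → A) (m p : ℕ) (f₀ : (Fin (p + 1) → ℝ) → A)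
    (x : Fin (m + 1) → ℝ) : A :=
  (∑' k : ℕ, (((-1 : ℝ) ^ k * rad m p x ^ (2 * k)) / (2 * k).factorial) •
      lapIterP p k f₀ (projP m p x)) +
  emb v m (normq m p x) *
    ∑' k : ℕ, (((-1 : ℝ) ^ k * rad m p x ^ (2 * k + 1)) / (2 * k + 1).factorial) •
      lapIterP p k (DopP v p f₀) (projP m p x)

/-- The coefficient `Γ(q/2)(-1)^k r^{2k} / (2^{2k} k! Γ(k + q/2))`. -/
noncomputable def hgckC (q k : ℕ) (r : ℝ) : ℝ :=
  (Real.Gamma ((q : ℝ) / 2) * (-1) ^ k * r ^ (2 * k)) /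
    (2 ^ (2 * k) * (k.factorial : ℝ) * Real.Gamma ((k : ℝ) + (q : ℝ) / 2))

/-- The coefficient `Γ(q/2)(-1)^k r^{2k} / (2^{2k+1} k! Γ(k + q/2 + 1))`. -/
noncomputable def gckC' (q k : ℕ) (r : ℝ) : ℝ :=
  (Real.Gamma ((q : ℝ) / 2) * (-1) ^ k * r ^ (2 * k)) /
    (2 ^ (2 * k + 1) * (k.factorial : ℝ) * Real.Gamma ((k : ℝ) + (q : ℝ) / 2 + 1))

/-- The coefficient `Γ(q/2 + 1)(-1)^k r^{2k} / (2^{2k} k! Γ(k + q/2 + 1))`. -/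
noncomputable def hgckC' (q k : ℕ) (r : ℝ) : ℝ :=
  (Real.Gamma ((q : ℝ) / 2 + 1) * (-1) ^ k * r ^ (2 * k)) /
    (2 ^ (2 * k) * (k.factorial : ℝ) * Real.Gamma ((k : ℝ) + (q : ℝ) / 2 + 1))

/-- The monogenic generalized CK-extension `GCK[A₀]`. -/
noncomputable def GCKe (v : ℕ → A) (m p : ℕ) (A₀ : (Fin (p + 1) → ℝ) → A)
    (x : Fin (m + 1) → ℝ) : A :=
  (∑' k : ℕ, hgckC (m - p) k (rad m p x) • lapIterP p k A₀ (projP m p x)) +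
  emb v m (xqpart m p x) *
    ∑' k : ℕ, gckC' (m - p) k (rad m p x) • lapIterP p k (DopP v p A₀) (projP m p x)

/-- The harmonic generalized CK-extension `HGCK[A₀, A₁]`. -/
noncomputable def HGCKe (v : ℕ → A) (m p : ℕ) (A₀ A₁ : (Fin (p + 1) → ℝ) → A)
    (x : Fin (m + 1) → ℝ) : A :=
  (∑' k : ℕ, hgckC (m - p) k (rad m p x) • lapIterP p k A₀ (projP m p x)) +
  emb v m (xqpart m p x) *
    ∑' k : ℕ, hgckC' (m - p) k (rad m p x) • lapIterP p k A₁ (projP m p x)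

/-- The operator `(1/r)∂_r`, extended to `r = 0` by its limit `∂_r²` (on even
functions). -/
noncomputable def T1 (p : ℕ) (G : (Fin (p + 1) → ℝ) × ℝ → A) :
    (Fin (p + 1) → ℝ) × ℝ → A := fun z =>
  if z.2 = 0 then pdSr2 p G z else (z.2)⁻¹ • pdSr p G z

/-- The operator `∂_r ∘ (1/r)`, extended to `r = 0` by its limit `(1/2)∂_r²` (on odd
functions). -/
noncomputable def T2 (p : ℕ) (G : (Fin (p + 1) → ℝ) × ℝ → A) :
    (Fin (p + 1) → ℝ) × ℝ → A := fun z =>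
  if z.2 = 0 then (2 : ℝ)⁻¹ • pdSr2 p G z
  else fderiv ℝ (fun t : ℝ => t⁻¹ • G (z.1, t)) z.2 1

/-- `C_q(k) = (q-1)(q-3)⋯(q-2k+1)`, `C_q(0) = 1`. -/
noncomputable def cq (q k : ℕ) : ℝ :=
  ∏ i ∈ Finset.range k, ((q : ℝ) - (2 * (i : ℝ) + 1))

/-- Double factorial. -/
def dfac : ℕ → ℕ
  | 0 => 1
  | 1 => 1
  | n + 2 => (n + 2) * dfac n

/-- The Fueter-Sce constant `γ_q = (-1)^{(q-1)/2} (q-1)!!/(q-2)!!`. -/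
noncomputable def gammaQ (q : ℕ) : ℝ :=
  (-1 : ℝ) ^ ((q - 1) / 2) * (dfac (q - 1) : ℝ) / (dfac (q - 2) : ℝ)

/-!
In the variables `(x_p, t)` with `t = r²`, a generalized partial-slice function is
`Φ(x_p, t) + x_q Ψ(x_p, t)`, and `Δ_x` acts on `Φ` as `L_{2q} = 4t ∂_t² + 2q ∂_t + Δ_{x_p}` and on
`Ψ` as `L_{2q+4}`. Since `L_{α+4} ∂_t = ∂_t L_α`, the kernel of `L_α` is carried into that of
`L_{α+4}` by `∂_t`. On the kernel of `L_α` the operator `L_{2q}` is `(2q - α) ∂_t`.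

The two halves of `CK[f₀]` are the power series `cos √(t Δ_{x_p})` and
`sin √(t Δ_{x_p}) / √(t Δ_{x_p})` applied to `f₀` and `D_{x_p} f₀`; they solve `L_2 Φ = 0` and
`L_6 Ψ = 0`. Hence `Δ_x^k` turns them, up to a common factor, into `∂_t^k Φ ∈ ker L_{2+4k}` and
`∂_t^k Ψ ∈ ker L_{6+4k}`. For `k = (q-1)/2` these are exactly `ker L_{2q}` and `ker L_{2q+4}`, so
both halves are harmonic.
-/

open scoped ContDiff NNReal ENNReal

section DirDeriv

variable {E F G : Type*} [NormedAddCommGroup E] [NormedSpace ℝ E]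
  [NormedAddCommGroup F] [NormedSpace ℝ F] [NormedAddCommGroup G] [NormedSpace ℝ G]
  {V : Set E} {f g : E → F} {x : E}

/-- The directional derivative `∂_e f`; the operators `pdF`, `pdP`, `pdSx` and `pdSr` are all
of this form. -/
noncomputable def dirDeriv (e : E) (f : E → F) (x : E) : F := fderiv ℝ f x e

theorem differentiableAt_of_contDiffOn_infty (hV : IsOpen V) (hf : ContDiffOn ℝ ∞ f V)
    (hx : x ∈ V) : DifferentiableAt ℝ f x :=
  (hf.contDiffAt (hV.mem_nhds hx)).differentiableAt (by simp)

theorem contDiffOn_fderiv (hV : IsOpen V) (hf : ContDiffOn ℝ ∞ f V) :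
    ContDiffOn ℝ ∞ (fderiv ℝ f) V :=
  ((contDiffOn_infty_iff_fderiv_of_isOpen hV).1 hf).2

theorem contDiffOn_dirDeriv (hV : IsOpen V) (hf : ContDiffOn ℝ ∞ f V) (e : E) :
    ContDiffOn ℝ ∞ (dirDeriv e f) V :=
  (contDiffOn_fderiv hV hf).clm_apply contDiffOn_const

theorem eqOn_dirDeriv (hV : IsOpen V) (h : Set.EqOn f g V) (e : E) :
    Set.EqOn (dirDeriv e f) (dirDeriv e g) V := fun _ hx => by
  simp only [dirDeriv, (h.eventuallyEq_of_mem (hV.mem_nhds hx)).fderiv_eq]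

theorem dirDeriv_add_apply (hf : DifferentiableAt ℝ f x) (hg : DifferentiableAt ℝ g x) (e : E) :
    dirDeriv e (fun y => f y + g y) x = dirDeriv e f x + dirDeriv e g x := by
  simp [dirDeriv, fderiv_fun_add hf hg]

theorem dirDeriv_sum_apply {ι : Type*} {u : Finset ι} {f : ι → E → F}
    (hf : ∀ i ∈ u, DifferentiableAt ℝ (f i) x) (e : E) :
    dirDeriv e (fun y => ∑ i ∈ u, f i y) x = ∑ i ∈ u, dirDeriv e (f i) x := by
  simp [dirDeriv, fderiv_fun_sum hf]

theorem dirDeriv_const_smul_apply (hf : DifferentiableAt ℝ f x) (c : ℝ) (e : E) :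
    dirDeriv e (fun y => c • f y) x = c • dirDeriv e f x := by
  simp [dirDeriv, fderiv_fun_const_smul hf]

theorem dirDeriv_smul_apply {c : E → ℝ} (hc : DifferentiableAt ℝ c x)
    (hf : DifferentiableAt ℝ f x) (e : E) :
    dirDeriv e (fun y => c y • f y) x = c x • dirDeriv e f x + dirDeriv e c x • f x := by
  simp [dirDeriv, fderiv_fun_smul hc hf]

theorem dirDeriv_clm_apply (J : F →L[ℝ] G) (hf : DifferentiableAt ℝ f x) (e : E) :
    dirDeriv e (fun y => J (f y)) x = J (dirDeriv e f x) := by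
  have hJ : HasFDerivAt (fun y => J (f y)) (J ∘L fderiv ℝ f x) x :=
    J.hasFDerivAt.comp x hf.hasFDerivAt
  rw [dirDeriv, hJ.fderiv]
  rfl

theorem dirDeriv_dirDeriv_apply (hV : IsOpen V) (hf : ContDiffOn ℝ ∞ f V) (hx : x ∈ V)
    (e e' : E) : dirDeriv e (dirDeriv e' f) x = fderiv ℝ (fderiv ℝ f) x e e' :=
  dirDeriv_clm_apply (ContinuousLinearMap.apply ℝ F e')
    (differentiableAt_of_contDiffOn_infty hV (contDiffOn_fderiv hV hf) hx) e

theorem dirDeriv_comm (hV : IsOpen V) (hf : ContDiffOn ℝ ∞ f V) (e e' : E) :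
    Set.EqOn (dirDeriv e (dirDeriv e' f)) (dirDeriv e' (dirDeriv e f)) V := fun x hx => by
  have hsymm : IsSymmSndFDerivAt ℝ f x :=
    (hf.contDiffAt (hV.mem_nhds hx)).isSymmSndFDerivAt (by
      rw [minSmoothness_of_isRCLikeNormedField]
      exact WithTop.coe_le_coe.2 (le_top (a := (2 : ℕ∞))))
  rw [dirDeriv_dirDeriv_apply hV hf hx, dirDeriv_dirDeriv_apply hV hf hx, hsymm e e']

theorem norm_iteratedFDeriv_dirDeriv_le (hV : IsOpen V) (hf : ContDiffOn ℝ ∞ f V) (hx : x ∈ V)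
    (e : E) (n : ℕ) :
    ‖iteratedFDeriv ℝ n (dirDeriv e f) x‖ ≤ ‖e‖ * ‖iteratedFDeriv ℝ (n + 1) f x‖ := by
  rw [← norm_iteratedFDeriv_fderiv]
  exact norm_iteratedFDeriv_clm_apply_const
    ((contDiffOn_fderiv hV hf).contDiffAt (hV.mem_nhds hx)) (N := ∞) (by exact_mod_cast le_top)

end DirDeriv

section LaplaceAlong

variable {E F G ι : Type*} [NormedAddCommGroup E] [NormedSpace ℝ E]
  [NormedAddCommGroup F] [NormedSpace ℝ F] [NormedAddCommGroup G] [NormedSpace ℝ G]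
  [Fintype ι] {e : ι → E} {V : Set E} {f g : E → F}

/-- The constant-coefficient operator `∑ᵢ ∂_{e i}²`. For the standard basis of `ℝⁿ` it is the
Laplacian, by definition both `lapF` and `lapP`. -/
noncomputable def laplaceAlong (e : ι → E) (f : E → F) (x : E) : F :=
  ∑ i, dirDeriv (e i) (dirDeriv (e i) f) x

theorem contDiffOn_laplaceAlong (hV : IsOpen V) (hf : ContDiffOn ℝ ∞ f V) :
    ContDiffOn ℝ ∞ (laplaceAlong e f) V :=
  ContDiffOn.sum fun _ _ => contDiffOn_dirDeriv hV (contDiffOn_dirDeriv hV hf _) _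

theorem contDiffOn_iterate_laplaceAlong (hV : IsOpen V) (hf : ContDiffOn ℝ ∞ f V) (k : ℕ) :
    ContDiffOn ℝ ∞ ((laplaceAlong e)^[k] f) V := by
  induction k with
  | zero => exact hf
  | succ k ih =>
    rw [Function.iterate_succ_apply']
    exact contDiffOn_laplaceAlong hV ih

theorem eqOn_laplaceAlong (hV : IsOpen V) (h : Set.EqOn f g V) :
    Set.EqOn (laplaceAlong e f) (laplaceAlong e g) V := fun _ hx =>
  Finset.sum_congr rfl fun _ _ => eqOn_dirDeriv hV (eqOn_dirDeriv hV h _) _ hx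

theorem laplaceAlong_add (hV : IsOpen V) (hf : ContDiffOn ℝ ∞ f V) (hg : ContDiffOn ℝ ∞ g V) :
    Set.EqOn (laplaceAlong e fun x => f x + g x)
      (fun x => laplaceAlong e f x + laplaceAlong e g x) V := fun x hx => by
  have hfirst (a : E) : Set.EqOn (dirDeriv a fun x => f x + g x)
      (fun x => dirDeriv a f x + dirDeriv a g x) V := fun y hy =>
    dirDeriv_add_apply (differentiableAt_of_contDiffOn_infty hV hf hy)
      (differentiableAt_of_contDiffOn_infty hV hg hy) a
  simp only [laplaceAlong, ← Finset.sum_add_distrib]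
  refine Finset.sum_congr rfl fun i _ => ?_
  rw [eqOn_dirDeriv hV (hfirst _) _ hx]
  exact dirDeriv_add_apply
    (differentiableAt_of_contDiffOn_infty hV (contDiffOn_dirDeriv hV hf _) hx)
    (differentiableAt_of_contDiffOn_infty hV (contDiffOn_dirDeriv hV hg _) hx) _

theorem laplaceAlong_clm (J : F →L[ℝ] G) (hV : IsOpen V) (hf : ContDiffOn ℝ ∞ f V) :
    Set.EqOn (laplaceAlong e fun x => J (f x)) (fun x => J (laplaceAlong e f x)) V :=
  fun x hx => by
  have hfirst (a : E) : Set.EqOn (dirDeriv a fun x => J (f x)) (fun x => J (dirDeriv a f x)) V :=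
    fun y hy => dirDeriv_clm_apply J (differentiableAt_of_contDiffOn_infty hV hf hy) a
  simp only [laplaceAlong, map_sum]
  refine Finset.sum_congr rfl fun i _ => ?_
  rw [eqOn_dirDeriv hV (hfirst _) _ hx]
  exact dirDeriv_clm_apply J
    (differentiableAt_of_contDiffOn_infty hV (contDiffOn_dirDeriv hV hf _) hx) _

theorem dirDeriv_laplaceAlong (hV : IsOpen V) (hf : ContDiffOn ℝ ∞ f V) (a : E) :
    Set.EqOn (dirDeriv a (laplaceAlong e f)) (laplaceAlong e (dirDeriv a f)) V := fun x hx => by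
  refine (dirDeriv_sum_apply (fun i _ => differentiableAt_of_contDiffOn_infty hV
    (contDiffOn_dirDeriv hV (contDiffOn_dirDeriv hV hf _) _) hx) a).trans
    (Finset.sum_congr rfl fun i _ => ?_)
  rw [dirDeriv_comm hV (contDiffOn_dirDeriv hV hf _) _ _ hx,
    eqOn_dirDeriv hV (dirDeriv_comm hV hf _ _) _ hx]

theorem norm_iteratedFDeriv_laplaceAlong_le (hV : IsOpen V) (hf : ContDiffOn ℝ ∞ f V) {x : E}
    (hx : x ∈ V) (n : ℕ) :
    ‖iteratedFDeriv ℝ n (laplaceAlong e f) x‖ ≤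
      (∑ i, ‖e i‖ ^ 2) * ‖iteratedFDeriv ℝ (n + 2) f x‖ := by
  have hsmooth (i : ι) : ContDiffOn ℝ ∞ (dirDeriv (e i) f) V := contDiffOn_dirDeriv hV hf _
  have hsum : iteratedFDeriv ℝ n (laplaceAlong e f) x =
      ∑ i, iteratedFDeriv ℝ n (dirDeriv (e i) (dirDeriv (e i) f)) x :=
    iteratedFDeriv_fun_sum_apply fun i _ =>
      ((contDiffOn_dirDeriv hV (hsmooth i) _).contDiffAt (hV.mem_nhds hx)).of_le
        (by exact_mod_cast le_top)
  rw [hsum, Finset.sum_mul]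
  refine norm_sum_le_of_le _ fun i _ => ?_
  calc _ ≤ ‖e i‖ * ‖iteratedFDeriv ℝ (n + 1) (dirDeriv (e i) f) x‖ :=
        norm_iteratedFDeriv_dirDeriv_le hV (hsmooth i) hx _ n
    _ ≤ ‖e i‖ * (‖e i‖ * ‖iteratedFDeriv ℝ (n + 2) f x‖) := by
        gcongr
        exact norm_iteratedFDeriv_dirDeriv_le hV hf hx _ (n + 1)
    _ = _ := by ring

theorem norm_iteratedFDeriv_iterate_laplaceAlong_le (hV : IsOpen V) (hf : ContDiffOn ℝ ∞ f V)
    {x : E} (hx : x ∈ V) (k n : ℕ) :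
    ‖iteratedFDeriv ℝ n ((laplaceAlong e)^[k] f) x‖ ≤
      (∑ i, ‖e i‖ ^ 2) ^ k * ‖iteratedFDeriv ℝ (2 * k + n) f x‖ := by
  induction k generalizing n with
  | zero => rw [Nat.mul_zero, Nat.zero_add, pow_zero, one_mul]; rfl
  | succ k ih =>
    rw [Function.iterate_succ_apply', pow_succ', mul_assoc,
      show 2 * (k + 1) + n = 2 * k + (n + 2) by ring]
    have hk := contDiffOn_iterate_laplaceAlong (e := e) hV hf k
    exact (norm_iteratedFDeriv_laplaceAlong_le hV hk hx n).trans
      (mul_le_mul_of_nonneg_left (ih (n + 2)) (by positivity))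

theorem iterate_laplaceAlong_clm (J : F →L[ℝ] G) (hV : IsOpen V) (hf : ContDiffOn ℝ ∞ f V)
    (k : ℕ) : Set.EqOn ((laplaceAlong e)^[k] fun x => J (f x))
      (fun x => J ((laplaceAlong e)^[k] f x)) V := by
  induction k with
  | zero => exact fun _ _ => rfl
  | succ k ih =>
    simp only [Function.iterate_succ_apply']
    exact (eqOn_laplaceAlong hV ih).trans
      (laplaceAlong_clm J hV (contDiffOn_iterate_laplaceAlong hV hf k))

theorem fderiv_laplaceAlong (hV : IsOpen V) (hf : ContDiffOn ℝ ∞ f V) :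
    Set.EqOn (fderiv ℝ (laplaceAlong e f)) (laplaceAlong e (fderiv ℝ f)) V := fun x hx => by
  ext a
  exact (dirDeriv_laplaceAlong hV hf a hx).trans
    (laplaceAlong_clm (ContinuousLinearMap.apply ℝ F a) hV (contDiffOn_fderiv hV hf) hx)

theorem fderiv_iterate_laplaceAlong (hV : IsOpen V) (hf : ContDiffOn ℝ ∞ f V) (k : ℕ) :
    Set.EqOn (fderiv ℝ ((laplaceAlong e)^[k] f)) ((laplaceAlong e)^[k] (fderiv ℝ f)) V := by
  induction k with
  | zero => exact fun _ _ => rfl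
  | succ k ih =>
    simp only [Function.iterate_succ_apply']
    exact (fderiv_laplaceAlong hV (contDiffOn_iterate_laplaceAlong hV hf k)).trans
      (eqOn_laplaceAlong hV ih)

theorem dirDeriv_iterate_laplaceAlong (hV : IsOpen V) (hf : ContDiffOn ℝ ∞ f V) (a : E) (k : ℕ) :
    Set.EqOn (dirDeriv a ((laplaceAlong e)^[k] f)) ((laplaceAlong e)^[k] (dirDeriv a f)) V :=
  fun x hx => by
    rw [dirDeriv, fderiv_iterate_laplaceAlong hV hf k hx]
    exact (iterate_laplaceAlong_clm (ContinuousLinearMap.apply ℝ F a) hV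
      (contDiffOn_fderiv hV hf) k hx).symm

theorem sum_iterate_laplaceAlong_dirDeriv_dirDeriv (hV : IsOpen V) (hf : ContDiffOn ℝ ∞ f V)
    (k : ℕ) {x : E} (hx : x ∈ V) :
    ∑ i, (laplaceAlong e)^[k] (dirDeriv (e i) (dirDeriv (e i) f)) x =
      (laplaceAlong e)^[k] (laplaceAlong e f) x := by
  rw [← Function.iterate_succ_apply, Function.iterate_succ_apply']
  refine Finset.sum_congr rfl fun i _ => ?_
  rw [← dirDeriv_iterate_laplaceAlong hV (contDiffOn_dirDeriv hV hf _) _ _ hx]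
  exact eqOn_dirDeriv hV (dirDeriv_iterate_laplaceAlong hV hf _ _).symm _ hx

theorem eqOn_iterate_laplaceAlong (hV : IsOpen V) (h : Set.EqOn f g V) (k : ℕ) :
    Set.EqOn ((laplaceAlong e)^[k] f) ((laplaceAlong e)^[k] g) V := by
  induction k with
  | zero => exact h
  | succ k ih =>
    simp only [Function.iterate_succ_apply']
    exact eqOn_laplaceAlong hV ih

end LaplaceAlong

section FirstOrder

variable {E F G ι : Type*} [NormedAddCommGroup E] [NormedSpace ℝ E]
  [NormedAddCommGroup F] [NormedSpace ℝ F] [NormedAddCommGroup G] [NormedSpace ℝ G]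
  [Fintype ι] {e : ι → E} {V : Set E} {g : E → F}

/-- The first-order operator `∑ᵢ Jᵢ ∂_{e i}` with constant coefficients; for `Jᵢ` the left
multiplication by `vᵢ` it is the Dirac operator `D_{x_p}`. -/
noncomputable def diracAlong (J : ι → F →L[ℝ] G) (e : ι → E) (g : E → F) (x : E) : G :=
  ∑ i, J i (dirDeriv (e i) g x)

theorem diracAlong_eq_clm_fderiv (J : ι → F →L[ℝ] G) (e : ι → E) (g : E → F) :
    diracAlong J e g =
      fun x => (∑ i, J i ∘L ContinuousLinearMap.apply ℝ F (e i)) (fderiv ℝ g x) := by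
  funext x
  simp [diracAlong, dirDeriv]

theorem diracAlong_diracAlong [DecidableEq ι] {J : ι → F →L[ℝ] G} {J' : ι → G →L[ℝ] F}
    (hJ : ∀ i j a, J' i (J j a) + J' j (J i a) = if i = j then (2 : ℝ) • a else 0)
    (hV : IsOpen V) (hg : ContDiffOn ℝ ∞ g V) :
    Set.EqOn (diracAlong J' e (diracAlong J e g)) (laplaceAlong e g) V := fun x hx => by
  have hexpand : diracAlong J' e (diracAlong J e g) x =
      ∑ i, ∑ j, J' i (J j (dirDeriv (e i) (dirDeriv (e j) g) x)) := by
    refine Finset.sum_congr rfl fun i _ => ?_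
    have hdiff (j : ι) : DifferentiableAt ℝ (dirDeriv (e j) g) x :=
      differentiableAt_of_contDiffOn_infty hV (contDiffOn_dirDeriv hV hg _) hx
    have hsum : dirDeriv (e i) (diracAlong J e g) x =
        ∑ j, J j (dirDeriv (e i) (dirDeriv (e j) g) x) :=
      (dirDeriv_sum_apply (fun j _ => (J j).differentiableAt.comp x (hdiff j)) (e i)).trans
        (Finset.sum_congr rfl fun j _ => dirDeriv_clm_apply (J j) (hdiff j) (e i))
    rw [hsum, map_sum]
  have hswap : ∑ i, ∑ j, J' i (J j (dirDeriv (e i) (dirDeriv (e j) g) x)) =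
      ∑ i, ∑ j, J' j (J i (dirDeriv (e i) (dirDeriv (e j) g) x)) := by
    rw [Finset.sum_comm]
    exact Finset.sum_congr rfl fun i _ => Finset.sum_congr rfl fun j _ => by
      rw [dirDeriv_comm hV hg _ _ hx]
  have hdouble : (2 : ℝ) • diracAlong J' e (diracAlong J e g) x = (2 : ℝ) • laplaceAlong e g x := by
    calc _ = ∑ i, ∑ j, (J' i (J j (dirDeriv (e i) (dirDeriv (e j) g) x)) +
          J' j (J i (dirDeriv (e i) (dirDeriv (e j) g) x))) := by
          simp only [Finset.sum_add_distrib]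
          rw [← hswap, two_smul, hexpand]
      _ = _ := by simp [hJ, laplaceAlong, Finset.smul_sum]
  exact smul_right_injective F two_ne_zero hdouble

end FirstOrder

section CauchyEstimates

variable {𝕜 E F : Type*} [NontriviallyNormedField 𝕜] [NormedAddCommGroup E] [NormedSpace 𝕜 E]
  [NormedAddCommGroup F] [NormedSpace 𝕜 F] {f : E → F}
  {P : FormalMultilinearSeries 𝕜 E F} {x : E}

theorem norm_iteratedFDeriv_le_of_hasFPowerSeriesOnBall [CompleteSpace F] {r : ℝ≥0∞}
    (h : HasFPowerSeriesOnBall f P x r) (n : ℕ) :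
    ‖iteratedFDeriv 𝕜 n f x‖ ≤ n.factorial * ‖P n‖ := by
  refine ContinuousMultilinearMap.opNorm_le_bound (by positivity) fun w => ?_
  have hperm (σ : Equiv.Perm (Fin n)) : ‖P n fun i => w (σ i)‖ ≤ ‖P n‖ * ∏ i, ‖w i‖ := by
    rw [← Equiv.prod_comp σ fun i => ‖w i‖]
    exact (P n).le_opNorm _
  rw [h.iteratedFDeriv_eq_sum_of_completeSpace, mul_assoc]
  exact (norm_sum_le_of_le _ fun σ _ => hperm σ).trans_eq (by simp [Fintype.card_perm])

theorem exists_nnnorm_changeOrigin_le {b : ℝ≥0} (hb : 0 < b) (hbP : (b + b : ℝ≥0∞) < P.radius) :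
    ∃ S : ℝ≥0, ∀ y : E, ‖y‖₊ ≤ b → ∀ n, ‖P.changeOrigin y n‖₊ ≤ S * b⁻¹ ^ n := by
  have hsum := (NNReal.summable_sigma.1 (P.changeOriginSeries_summable_aux₁ hbP)).2
  refine ⟨∑' n, ∑' s : Σ l : ℕ, { s : Finset (Fin (n + l)) // s.card = l },
    ‖P (n + s.1)‖₊ * b ^ s.1 * b ^ n, fun y hy n => ?_⟩
  have hyP : (‖y‖₊ : ℝ≥0∞) < P.radius :=
    lt_of_le_of_lt (by exact_mod_cast hy) (lt_of_le_of_lt le_self_add hbP)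
  have hsum_n : Summable fun s : Σ l : ℕ, { s : Finset (Fin (n + l)) // s.card = l } =>
      ‖P (n + s.1)‖₊ * b ^ s.1 :=
    P.changeOriginSeries_summable_aux₂ (lt_of_le_of_lt le_self_add hbP) n
  have hmono (s : Σ l : ℕ, { s : Finset (Fin (n + l)) // s.card = l }) :
      ‖P (n + s.1)‖₊ * ‖y‖₊ ^ s.1 ≤ ‖P (n + s.1)‖₊ * b ^ s.1 := by gcongr
  rw [inv_pow, ← div_eq_mul_inv, le_div_iff₀ (pow_pos hb n)]
  calc ‖P.changeOrigin y n‖₊ * b ^ n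
      ≤ (∑' s : Σ l : ℕ, { s : Finset (Fin (n + l)) // s.card = l },
          ‖P (n + s.1)‖₊ * b ^ s.1) * b ^ n := by
        gcongr
        exact (P.nnnorm_changeOrigin_le n hyP).trans
          ((NNReal.summable_of_le hmono hsum_n).tsum_le_tsum hmono hsum_n)
    _ ≤ _ := by
        rw [← NNReal.tsum_mul_right]
        exact hsum.le_tsum n fun _ _ => zero_le

theorem exists_norm_iteratedFDeriv_le_of_analyticAt [CompleteSpace F] (hf : AnalyticAt 𝕜 f x) :
    ∃ C R : ℝ, 0 ≤ C ∧ 0 ≤ R ∧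
      ∀ᶠ y in 𝓝 x, ∀ n : ℕ, ‖iteratedFDeriv 𝕜 n f y‖ ≤ C * R ^ n * n.factorial := by
  obtain ⟨P, r, hP⟩ := hf
  obtain ⟨a, ha0, ha⟩ := ENNReal.lt_iff_exists_nnreal_btwn.1 hP.r_pos
  have hb : 0 < a / 2 := half_pos (by exact_mod_cast ha0)
  have hbr : ((a / 2 : ℝ≥0) + (a / 2 : ℝ≥0) : ℝ≥0∞) < r := by
    rwa [← ENNReal.coe_add, add_halves]
  obtain ⟨S, hS⟩ := exists_nnnorm_changeOrigin_le hb (hbr.trans_le hP.r_le)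
  refine ⟨S, (a / 2 : ℝ≥0)⁻¹, by positivity, by positivity, ?_⟩
  filter_upwards [Metric.ball_mem_nhds x (show (0 : ℝ) < (a / 2 : ℝ≥0) from hb)] with y hy n
  have hyb : ‖y - x‖₊ ≤ a / 2 := (mem_ball_iff_norm.1 hy).le
  have hyr : (‖y - x‖₊ : ℝ≥0∞) < r :=
    lt_of_le_of_lt (by exact_mod_cast hyb) (lt_of_le_of_lt le_self_add hbr)
  have hPy := hP.changeOrigin hyr
  rw [add_sub_cancel] at hPy
  calc ‖iteratedFDeriv 𝕜 n f y‖ ≤ n.factorial * ‖P.changeOrigin (y - x) n‖ :=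
        norm_iteratedFDeriv_le_of_hasFPowerSeriesOnBall hPy n
    _ ≤ n.factorial * (S * ((a / 2 : ℝ≥0)⁻¹ : ℝ) ^ n) := by
        gcongr
        exact_mod_cast hS _ hyb n
    _ = _ := mul_comm _ _

end CauchyEstimates

section CauchyBounds

variable {E F G ι : Type*} [NormedAddCommGroup E] [NormedSpace ℝ E]
  [NormedAddCommGroup F] [NormedSpace ℝ F] [NormedAddCommGroup G] [NormedSpace ℝ G]

/-- Uniform Cauchy estimates of rate `r` for `g` and all its derivatives on `V`. The shift by `j`
keeps the rate unchanged under differentiation. -/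
structure CauchyBoundedOn (g : E → F) (r : ℝ) (V : Set E) : Prop where
  rate_nonneg : 0 ≤ r
  contDiffOn : ContDiffOn ℝ ∞ g V
  bound : ∀ j, ∃ C, ∀ n, ∀ y ∈ V, ‖iteratedFDeriv ℝ (n + j) g y‖ ≤ C * r ^ n * n.factorial

namespace CauchyBoundedOn

variable {g : E → F} {r : ℝ} {V : Set E}

theorem fderiv (h : CauchyBoundedOn g r V) (hV : IsOpen V) :
    CauchyBoundedOn (fderiv ℝ g) r V where
  rate_nonneg := h.rate_nonneg
  contDiffOn := contDiffOn_fderiv hV h.contDiffOn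
  bound j := by
    obtain ⟨C, hC⟩ := h.bound (j + 1)
    exact ⟨C, fun n y hy => norm_iteratedFDeriv_fderiv.trans_le (hC n y hy)⟩

theorem clm_comp (h : CauchyBoundedOn g r V) (hV : IsOpen V) (J : F →L[ℝ] G) :
    CauchyBoundedOn (fun y => J (g y)) r V where
  rate_nonneg := h.rate_nonneg
  contDiffOn := J.contDiff.comp_contDiffOn h.contDiffOn
  bound j := by
    obtain ⟨C, hC⟩ := h.bound j
    refine ⟨‖J‖ * C, fun n y hy => ?_⟩
    have hsmooth : ContDiffAt ℝ (n + j : ℕ) g y :=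
      (h.contDiffOn.contDiffAt (hV.mem_nhds hy)).of_le (by exact_mod_cast le_top)
    calc _ ≤ ‖J‖ * ‖iteratedFDeriv ℝ (n + j) g y‖ :=
          J.norm_iteratedFDeriv_comp_left hsmooth le_rfl
      _ ≤ ‖J‖ * (C * r ^ n * n.factorial) := by gcongr; exact hC n y hy
      _ = _ := by ring

theorem sum [Fintype ι] {g : ι → E → F} (h : ∀ i, CauchyBoundedOn (g i) r V) (hr : 0 ≤ r)
    (hV : IsOpen V) : CauchyBoundedOn (fun y => ∑ i, g i y) r V where
  rate_nonneg := hr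
  contDiffOn := ContDiffOn.sum fun i _ => (h i).contDiffOn
  bound j := by
    choose C hC using fun i => (h i).bound j
    refine ⟨∑ i, C i, fun n y hy => ?_⟩
    rw [iteratedFDeriv_fun_sum_apply fun i _ =>
      ((h i).contDiffOn.contDiffAt (hV.mem_nhds hy)).of_le (by exact_mod_cast le_top),
      Finset.sum_mul, Finset.sum_mul]
    exact norm_sum_le_of_le _ fun i _ => hC i n y hy

theorem dirDeriv (h : CauchyBoundedOn g r V) (hV : IsOpen V) (a : E) :
    CauchyBoundedOn (dirDeriv a g) r V :=
  (h.fderiv hV).clm_comp hV (ContinuousLinearMap.apply ℝ F a)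

theorem laplaceAlong [Fintype ι] (h : CauchyBoundedOn g r V) (hV : IsOpen V) (e : ι → E) :
    CauchyBoundedOn (laplaceAlong e g) r V :=
  sum (fun i => (h.dirDeriv hV (e i)).dirDeriv hV (e i)) h.rate_nonneg hV

theorem exists_norm_iterate_laplaceAlong_le [Fintype ι] (h : CauchyBoundedOn g r V)
    (hV : IsOpen V) (e : ι → E) :
    ∃ C, ∀ k, ∀ y ∈ V,
      ‖(GPSM.laplaceAlong e)^[k] g y‖ ≤ C * ((∑ i, ‖e i‖ ^ 2) * r ^ 2) ^ k * (2 * k).factorial := by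
  obtain ⟨C, hC⟩ := h.bound 0
  refine ⟨C, fun k y hy => ?_⟩
  rw [← norm_iteratedFDeriv_zero (𝕜 := ℝ)]
  calc _ ≤ _ := norm_iteratedFDeriv_iterate_laplaceAlong_le hV h.contDiffOn hy k 0
    _ ≤ (∑ i, ‖e i‖ ^ 2) ^ k * (C * r ^ (2 * k) * (2 * k).factorial) := by
        gcongr
        exact hC (2 * k) y hy
    _ = _ := by ring

end CauchyBoundedOn

theorem exists_cauchyBoundedOn_of_analyticAt [CompleteSpace F] {g : E → F} {x : E}
    (hg : AnalyticAt ℝ g x) : ∃ V r, IsOpen V ∧ x ∈ V ∧ CauchyBoundedOn g r V := by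
  obtain ⟨C, R, hC, hR, hbound⟩ := exists_norm_iteratedFDeriv_le_of_analyticAt hg
  obtain ⟨V, hVsub, hV, hxV⟩ := eventually_nhds_iff.1 (hbound.and hg.eventually_analyticAt)
  refine ⟨V, 2 * R, hV, hxV, by positivity,
    fun y hy => (hVsub y hy).2.contDiffAt.contDiffWithinAt,
    fun j => ⟨C * (2 * R) ^ j * j.factorial, fun n y hy => ?_⟩⟩
  have hfactorial : ((n + j).factorial : ℝ) ≤ 2 ^ (n + j) * n.factorial * j.factorial := by
    rw [← Nat.add_choose_mul_factorial_mul_factorial n j]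
    push_cast
    gcongr
    exact_mod_cast Nat.choose_le_two_pow (n + j) j
  calc _ ≤ C * R ^ (n + j) * (n + j).factorial := (hVsub y hy).1 (n + j)
    _ ≤ C * R ^ (n + j) * (2 ^ (n + j) * n.factorial * j.factorial) := by gcongr
    _ = _ := by ring

end CauchyBounds

section LapSeries

variable {E F G ι : Type*} [NormedAddCommGroup E] [NormedSpace ℝ E]
  [NormedAddCommGroup F] [NormedSpace ℝ F] [NormedAddCommGroup G] [NormedSpace ℝ G]
  [Fintype ι] {e : ι → E} {g : E → F} {c : ℕ → ℝ} {z : E × ℝ} {r : ℝ} {V : Set E}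

/-- The decay `c k = O(1 / (2k)!)`, which compensates the growth of `Δᵏ g` for analytic `g`. -/
def HasFactorialDecay (c : ℕ → ℝ) : Prop := ∃ M, ∀ k, |c k| * (2 * k).factorial ≤ M

/-- The coefficients of the derivative of the power series with coefficients `c`. -/
def derivCoeff (c : ℕ → ℝ) (k : ℕ) : ℝ := (k + 1) * c (k + 1)

/-- The power series `∑ₖ cₖ tᵏ Δᵏ g(y)` in `t`, where `Δ = ∑ᵢ ∂_{e i}²`. With `t = r²` both
halves of the Cauchy-Kovalevskaya extension have this shape. -/
noncomputable def lapSeries (c : ℕ → ℝ) (e : ι → E) (g : E → F) (z : E × ℝ) : F :=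
  ∑' k, (c k * z.2 ^ k) • (laplaceAlong e)^[k] g z.1

/-- A set of `(y, t)` on which every `lapSeries` of `g` with coefficients of factorial decay
is dominated by a geometric series. -/
def lapDomain (e : ι → E) (g : E → F) : Set (E × ℝ) :=
  {z | ∃ V r, IsOpen V ∧ z.1 ∈ V ∧ CauchyBoundedOn g r V ∧ |z.2| * ((∑ i, ‖e i‖ ^ 2) * r ^ 2) < 1}

namespace HasFactorialDecay

theorem derivCoeff (hc : HasFactorialDecay c) : HasFactorialDecay (derivCoeff c) := by
  obtain ⟨M, hM⟩ := hc
  refine ⟨M, fun k => le_trans ?_ (hM (k + 1))⟩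
  have hfactorial : (k + 1) * (2 * k).factorial ≤ (2 * (k + 1)).factorial := by
    rw [show 2 * (k + 1) = 2 * k + 1 + 1 by ring, Nat.factorial_succ, Nat.factorial_succ,
      ← mul_assoc]
    exact Nat.mul_le_mul_right _ (by nlinarith)
  calc |GPSM.derivCoeff c k| * (2 * k).factorial
      = |c (k + 1)| * ((k + 1) * (2 * k).factorial) := by
        rw [GPSM.derivCoeff, abs_mul, abs_of_nonneg (by positivity : (0 : ℝ) ≤ k + 1)]
        ring
    _ ≤ _ := by
        gcongr
        exact_mod_cast hfactorial

theorem exists_norm_smul_iterate_laplaceAlong_le (hc : HasFactorialDecay c)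
    (hg : CauchyBoundedOn g r V) (hV : IsOpen V) (e : ι → E) :
    ∃ C, ∀ k, ∀ y ∈ V,
      ‖c k • (laplaceAlong e)^[k] g y‖ ≤ C * ((∑ i, ‖e i‖ ^ 2) * r ^ 2) ^ k := by
  obtain ⟨M, hM⟩ := hc
  obtain ⟨C, hC⟩ := hg.exists_norm_iterate_laplaceAlong_le hV e
  refine ⟨M * |C|, fun k y hy => ?_⟩
  set ϑ := (∑ i, ‖e i‖ ^ 2) * r ^ 2
  calc ‖c k • (laplaceAlong e)^[k] g y‖ ≤ |c k| * (C * ϑ ^ k * (2 * k).factorial) := by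
        rw [norm_smul, Real.norm_eq_abs]
        gcongr
        exact hC k y hy
    _ ≤ |c k| * (|C| * ϑ ^ k * (2 * k).factorial) := by
        gcongr
        exact le_abs_self C
    _ = |c k| * (2 * k).factorial * (|C| * ϑ ^ k) := by ring
    _ ≤ M * (|C| * ϑ ^ k) := by
        gcongr
        exact hM k
    _ = M * |C| * ϑ ^ k := by ring

end HasFactorialDecay

theorem isOpen_lapDomain : IsOpen (lapDomain e g) := by
  refine isOpen_iff_mem_nhds.2 fun z ⟨V, r, hV, hzV, hg, hlt⟩ => ?_
  have hcont : Continuous fun w : E × ℝ => |w.2| * ((∑ i, ‖e i‖ ^ 2) * r ^ 2) := by fun_prop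
  filter_upwards [continuous_fst.continuousAt.preimage_mem_nhds (hV.mem_nhds hzV),
    (isOpen_Iio.preimage hcont).mem_nhds hlt] with w hwV hw
  exact ⟨V, r, hV, hwV, hg, hw⟩

theorem lapDomain_balanced {y : E} {s t : ℝ} (h : (y, t) ∈ lapDomain e g) (hst : |s| ≤ |t|) :
    (y, s) ∈ lapDomain e g := by
  obtain ⟨V, r, hV, hyV, hg, hlt⟩ := h
  exact ⟨V, r, hV, hyV, hg, lt_of_le_of_lt (by gcongr) hlt⟩

theorem mk_zero_mem_lapDomain [CompleteSpace F] {y : E} (hg : AnalyticAt ℝ g y) :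
    (y, 0) ∈ lapDomain e g := by
  obtain ⟨V, r, hV, hyV, hgV⟩ := exists_cauchyBoundedOn_of_analyticAt hg
  exact ⟨V, r, hV, hyV, hgV, by simp⟩

theorem lapDomain_subset_fderiv : lapDomain e g ⊆ lapDomain e (fderiv ℝ g) :=
  fun _ ⟨V, r, hV, hzV, hg, hlt⟩ => ⟨V, r, hV, hzV, hg.fderiv hV, hlt⟩

theorem lapDomain_subset_clm (J : F →L[ℝ] G) : lapDomain e g ⊆ lapDomain e fun y => J (g y) :=
  fun _ ⟨V, r, hV, hzV, hg, hlt⟩ => ⟨V, r, hV, hzV, hg.clm_comp hV J, hlt⟩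

theorem lapDomain_subset_dirDeriv (a : E) : lapDomain e g ⊆ lapDomain e (dirDeriv a g) :=
  fun _ ⟨V, r, hV, hzV, hg, hlt⟩ => ⟨V, r, hV, hzV, hg.dirDeriv hV a, hlt⟩

theorem lapDomain_subset_laplaceAlong : lapDomain e g ⊆ lapDomain e (laplaceAlong e g) :=
  fun _ ⟨V, r, hV, hzV, hg, hlt⟩ => ⟨V, r, hV, hzV, hg.laplaceAlong hV e, hlt⟩

theorem lapSeries_congr {g' : E → F} {V : Set E} (hV : IsOpen V) (h : Set.EqOn g g' V)
    (hz : z.1 ∈ V) : lapSeries c e g z = lapSeries c e g' z :=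
  tsum_congr fun k => by rw [eqOn_iterate_laplaceAlong hV h k hz]

theorem lapDomain_subset_diracAlong {κ : Type*} [Fintype κ] (J : κ → F →L[ℝ] G) (e' : κ → E) :
    lapDomain e g ⊆ lapDomain e (diracAlong J e' g) := by
  rw [diracAlong_eq_clm_fderiv]
  exact lapDomain_subset_fderiv.trans (lapDomain_subset_clm _)

theorem hasSum_lapSeries [CompleteSpace F] (hc : HasFactorialDecay c) (hz : z ∈ lapDomain e g) :
    HasSum (fun k => (c k * z.2 ^ k) • (laplaceAlong e)^[k] g z.1) (lapSeries c e g z) := by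
  obtain ⟨V, r, hV, hzV, hg, hlt⟩ := hz
  obtain ⟨C, hC⟩ := hc.exists_norm_smul_iterate_laplaceAlong_le hg hV e
  have hgeom := (summable_geometric_of_lt_one (by positivity) hlt).mul_left C
  refine (Summable.of_norm_bounded hgeom fun k => ?_).hasSum
  calc _ = |z.2| ^ k * ‖c k • (laplaceAlong e)^[k] g z.1‖ := by
        rw [norm_smul, norm_smul, norm_mul, norm_pow, Real.norm_eq_abs z.2]
        ring
    _ ≤ |z.2| ^ k * (C * ((∑ i, ‖e i‖ ^ 2) * r ^ 2) ^ k) := by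
        gcongr
        exact hC k _ hzV
    _ = _ := by rw [mul_pow]; ring

theorem hasSum_smul_lapSeries [CompleteSpace F] (hc : HasFactorialDecay c)
    (hz : z ∈ lapDomain e g) :
    HasSum (fun k => (k * c k * z.2 ^ k) • (laplaceAlong e)^[k] g z.1)
      (z.2 • lapSeries (derivCoeff c) e (laplaceAlong e g) z) := by
  refine (hasSum_nat_add_iff' 1).1 ?_
  simp only [Finset.sum_range_one, Nat.cast_zero, zero_mul, zero_smul, sub_zero]
  convert (hasSum_lapSeries hc.derivCoeff (lapDomain_subset_laplaceAlong hz)).const_smul z.2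
    using 2 with k
  rw [smul_smul, ← Function.iterate_succ_apply, derivCoeff, pow_succ]
  push_cast
  congr 1
  ring

theorem hasSum_lapSeries_derivCoeff [CompleteSpace F] (hc : HasFactorialDecay c)
    (hz : z ∈ lapDomain e g) :
    HasSum (fun k => (c k * (k * z.2 ^ (k - 1))) • (laplaceAlong e)^[k] g z.1)
      (lapSeries (derivCoeff c) e (laplaceAlong e g) z) := by
  refine (hasSum_nat_add_iff' 1).1 ?_
  simp only [Finset.sum_range_one, Nat.cast_zero, zero_mul, mul_zero, zero_smul, sub_zero]
  convert hasSum_lapSeries hc.derivCoeff (lapDomain_subset_laplaceAlong hz) using 2 with k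
  rw [← Function.iterate_succ_apply, derivCoeff, Nat.add_sub_cancel]
  push_cast
  congr 1
  ring

theorem lapSeries_clm [CompleteSpace F] (J : F →L[ℝ] G) (hc : HasFactorialDecay c)
    (hz : z ∈ lapDomain e g) :
    lapSeries c e (fun y => J (g y)) z = J (lapSeries c e g z) := by
  refine (HasSum.tsum_eq ?_)
  convert (hasSum_lapSeries hc hz).mapL J using 2 with k
  obtain ⟨V, _, hV, hzV, hg, -⟩ := hz
  rw [iterate_laplaceAlong_clm J hV hg.contDiffOn k hzV, map_smul]

/-- The derivative of the `k`-th term of `lapSeries c e g`. -/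
noncomputable def lapSeriesTermDeriv (c : ℕ → ℝ) (e : ι → E) (g : E → F) (k : ℕ) (z : E × ℝ) :
    E × ℝ →L[ℝ] F :=
  ((c k * z.2 ^ k) • (laplaceAlong e)^[k] (fderiv ℝ g) z.1) ∘L ContinuousLinearMap.fst ℝ E ℝ +
    (ContinuousLinearMap.snd ℝ E ℝ).smulRight
      ((c k * (k * z.2 ^ (k - 1))) • (laplaceAlong e)^[k] g z.1)

theorem hasFDerivAt_lapSeries_term (hg : ContDiffOn ℝ ∞ g V) (hV : IsOpen V) (hz : z.1 ∈ V)
    (k : ℕ) : HasFDerivAt (fun z : E × ℝ => (c k * z.2 ^ k) • (laplaceAlong e)^[k] g z.1)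
      (lapSeriesTermDeriv c e g k z) z := by
  have hbase := (differentiableAt_of_contDiffOn_infty hV
    (contDiffOn_iterate_laplaceAlong (e := e) hV hg k) hz).hasFDerivAt.comp z hasFDerivAt_fst
  rw [fderiv_iterate_laplaceAlong hV hg k hz] at hbase
  refine ((((hasFDerivAt_snd (𝕜 := ℝ) (p := z)).pow k).const_mul (c k)).smul hbase).congr_fderiv ?_
  ext <;> simp [lapSeriesTermDeriv, smul_smul]

theorem norm_lapSeriesTermDeriv_le {C₀ C₁ ϑ ε : ℝ} (hε : 0 < ε) {k : ℕ}
    (hg : ‖c k • (laplaceAlong e)^[k] g z.1‖ ≤ C₀ * ϑ ^ k)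
    (hg' : ‖c k • (laplaceAlong e)^[k] (fderiv ℝ g) z.1‖ ≤ C₁ * ϑ ^ k) (hz : |z.2| ≤ ε) :
    ‖lapSeriesTermDeriv c e g k z‖ ≤ C₁ * (ε * ϑ) ^ k + C₀ / ε * (k * (ε * ϑ) ^ k) := by
  have hbase : ‖(c k * z.2 ^ k) • (laplaceAlong e)^[k] (fderiv ℝ g) z.1‖ ≤ C₁ * (ε * ϑ) ^ k := by
    calc _ = |z.2| ^ k * ‖c k • (laplaceAlong e)^[k] (fderiv ℝ g) z.1‖ := by
          rw [norm_smul, norm_smul, norm_mul, norm_pow, Real.norm_eq_abs z.2]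
          ring
      _ ≤ ε ^ k * (C₁ * ϑ ^ k) := by gcongr
      _ = _ := by rw [mul_pow]; ring
  have hvert : ‖(c k * (k * z.2 ^ (k - 1))) • (laplaceAlong e)^[k] g z.1‖ ≤
      C₀ / ε * (k * (ε * ϑ) ^ k) := by
    calc _ = k * |z.2| ^ (k - 1) * ‖c k • (laplaceAlong e)^[k] g z.1‖ := by
          rw [norm_smul, norm_smul, norm_mul, norm_mul, norm_pow, Real.norm_eq_abs z.2,
            Real.norm_natCast]
          ring
      _ ≤ k * ε ^ (k - 1) * (C₀ * ϑ ^ k) := by gcongr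
      _ = _ := by
          cases k with
          | zero => simp
          | succ k => rw [Nat.add_sub_cancel, mul_pow, pow_succ ε]; field_simp
  refine norm_add_le_of_le ?_ ?_
  · exact (ContinuousLinearMap.opNorm_comp_le _ _).trans ((mul_le_of_le_one_right (norm_nonneg _)
      (ContinuousLinearMap.norm_fst_le ℝ E ℝ)).trans hbase)
  · rw [ContinuousLinearMap.norm_smulRight_apply]
    exact (mul_le_of_le_one_left (norm_nonneg _)
      (ContinuousLinearMap.norm_snd_le ℝ E ℝ)).trans hvert

theorem hasSum_lapSeriesTermDeriv [CompleteSpace F] (hc : HasFactorialDecay c)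
    (hz : z ∈ lapDomain e g) :
    HasSum (fun k => lapSeriesTermDeriv c e g k z)
      (lapSeries c e (fderiv ℝ g) z ∘L ContinuousLinearMap.fst ℝ E ℝ +
        (ContinuousLinearMap.snd ℝ E ℝ).smulRight
          (lapSeries (derivCoeff c) e (laplaceAlong e g) z)) :=
  ((hasSum_lapSeries hc (lapDomain_subset_fderiv hz)).mapL
    ((ContinuousLinearMap.compL ℝ (E × ℝ) E F).flip (ContinuousLinearMap.fst ℝ E ℝ))).add
  ((hasSum_lapSeries_derivCoeff hc hz).mapL
    (ContinuousLinearMap.smulRightL ℝ (E × ℝ) F (ContinuousLinearMap.snd ℝ E ℝ)))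

theorem hasFDerivAt_lapSeries [CompleteSpace F] (hc : HasFactorialDecay c)
    (hz : z ∈ lapDomain e g) :
    HasFDerivAt (lapSeries c e g)
      (lapSeries c e (fderiv ℝ g) z ∘L ContinuousLinearMap.fst ℝ E ℝ +
        (ContinuousLinearMap.snd ℝ E ℝ).smulRight
          (lapSeries (derivCoeff c) e (laplaceAlong e g) z)) z := by
  rw [← (hasSum_lapSeriesTermDeriv hc hz).tsum_eq]
  have hsummable := (hasSum_lapSeries hc hz).summable
  obtain ⟨V, r, hV, hzV, hg, hlt⟩ := hz
  obtain ⟨C₀, hbound₀⟩ := hc.exists_norm_smul_iterate_laplaceAlong_le hg hV e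
  obtain ⟨C₁, hbound₁⟩ := hc.exists_norm_smul_iterate_laplaceAlong_le (hg.fderiv hV) hV e
  set ϑ := (∑ i, ‖e i‖ ^ 2) * r ^ 2
  obtain ⟨ε, hεϑ, hzε⟩ : ∃ ε, ε * ϑ < 1 ∧ |z.2| < ε :=
    ((((continuous_id.mul continuous_const).tendsto |z.2|).eventually_lt_const hlt).filter_mono
      nhdsWithin_le_nhds |>.and self_mem_nhdsWithin).exists (f := 𝓝[>] |z.2|)
  have hε : 0 < ε := (abs_nonneg _).trans_lt hzε
  obtain ⟨δ, hδ, hball⟩ := Metric.isOpen_iff.1 hV _ hzV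
  have hεϑ' : ‖ε * ϑ‖ < 1 := by rwa [Real.norm_of_nonneg (by positivity)]
  have hu : Summable fun k : ℕ => C₁ * (ε * ϑ) ^ k + C₀ / ε * (k * (ε * ϑ) ^ k) :=
    ((summable_geometric_of_norm_lt_one hεϑ').mul_left _).add
      (by simpa using (summable_pow_mul_geometric_of_norm_lt_one 1 hεϑ').mul_left (C₀ / ε))
  have hzU : z ∈ Metric.ball z.1 δ ×ˢ Metric.ball (0 : ℝ) ε :=
    ⟨Metric.mem_ball_self hδ, by simpa using hzε⟩
  exact hasFDerivAt_tsum_of_isPreconnected hu (Metric.isOpen_ball.prod Metric.isOpen_ball)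
    ((convex_ball _ _).prod (convex_ball _ _)).isPreconnected
    (fun k w hw => hasFDerivAt_lapSeries_term hg.contDiffOn hV (hball hw.1) k)
    (fun k w hw => norm_lapSeriesTermDeriv_le hε (hbound₀ k _ (hball hw.1))
      (hbound₁ k _ (hball hw.1)) (mem_ball_zero_iff.1 hw.2).le) hzU hsummable hzU

end LapSeries

section LapSeriesDerivatives

variable {E F G ι κ : Type*} [NormedAddCommGroup E] [NormedSpace ℝ E]
  [NormedAddCommGroup F] [NormedSpace ℝ F] [CompleteSpace F] [NormedAddCommGroup G]
  [NormedSpace ℝ G] [Fintype ι] {e : ι → E} {g : E → F} {c : ℕ → ℝ} {z : E × ℝ}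

theorem dirDeriv_lapSeries (hc : HasFactorialDecay c) (hz : z ∈ lapDomain e g) (a : E) (τ : ℝ) :
    dirDeriv (a, τ) (lapSeries c e g) z =
      lapSeries c e (dirDeriv a g) z + τ • lapSeries (derivCoeff c) e (laplaceAlong e g) z := by
  have hbase : lapSeries c e (dirDeriv a g) z = lapSeries c e (fderiv ℝ g) z a :=
    lapSeries_clm (ContinuousLinearMap.apply ℝ F a) hc (lapDomain_subset_fderiv hz)
  rw [dirDeriv, (hasFDerivAt_lapSeries hc hz).fderiv, hbase]
  rfl

theorem dirDeriv_base_lapSeries (hc : HasFactorialDecay c) (hz : z ∈ lapDomain e g) (a : E) :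
    dirDeriv (a, 0) (lapSeries c e g) z = lapSeries c e (dirDeriv a g) z := by
  rw [dirDeriv_lapSeries hc hz, zero_smul, add_zero]

theorem dirDeriv_vert_lapSeries (hc : HasFactorialDecay c) (hz : z ∈ lapDomain e g) :
    dirDeriv (0, 1) (lapSeries c e g) z = lapSeries (derivCoeff c) e (laplaceAlong e g) z := by
  have hzero : lapSeries c e (dirDeriv 0 g) z = 0 := by
    have h0 : dirDeriv (0 : E) g = fun x => (0 : F →L[ℝ] F) (g x) := by
      funext x
      simp [dirDeriv]
    rw [h0, lapSeries_clm _ hc hz]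
    rfl
  rw [dirDeriv_lapSeries hc hz, hzero, one_smul, zero_add]

theorem contDiffOn_lapSeries [FiniteDimensional ℝ E] (hc : HasFactorialDecay c) :
    ContDiffOn ℝ ∞ (lapSeries c e g) (lapDomain e g) := by
  refine contDiffOn_infty.2 fun n => ?_
  induction n generalizing c g with
  | zero =>
    exact contDiffOn_zero.2 fun z hz =>
      (hasFDerivAt_lapSeries hc hz).continuousAt.continuousWithinAt
  | succ n ih =>
    have hderiv : ContDiffOn ℝ n (fderiv ℝ (lapSeries c e g)) (lapDomain e g) :=
      contDiffOn_clm_apply.2 fun a =>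
        (((ih hc).mono (lapDomain_subset_dirDeriv a.1)).add
          (((ih hc.derivCoeff).mono lapDomain_subset_laplaceAlong).const_smul a.2)).congr
          fun z hz => dirDeriv_lapSeries hc hz a.1 a.2
    have hdiff : DifferentiableOn ℝ (lapSeries c e g) (lapDomain e g) := fun z hz =>
      (hasFDerivAt_lapSeries hc hz).differentiableAt.differentiableWithinAt
    rw [Nat.cast_succ]
    exact (contDiffOn_succ_iff_fderiv_of_isOpen isOpen_lapDomain).2 ⟨hdiff, by simp, hderiv⟩

theorem diracAlong_lapSeries [Fintype κ] (hc : HasFactorialDecay c) (hz : z ∈ lapDomain e g)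
    (J : κ → F →L[ℝ] G) (e' : κ → E) :
    diracAlong J (fun i => (e' i, (0 : ℝ))) (lapSeries c e g) z =
      lapSeries c e (diracAlong J e' g) z := by
  have hfderiv (a : E) : dirDeriv (a, (0 : ℝ)) (lapSeries c e g) z =
      lapSeries c e (fderiv ℝ g) z a :=
    (dirDeriv_base_lapSeries hc hz a).trans
      (lapSeries_clm (ContinuousLinearMap.apply ℝ F a) hc (lapDomain_subset_fderiv hz))
  rw [diracAlong_eq_clm_fderiv J e' g, lapSeries_clm _ hc (lapDomain_subset_fderiv hz)]
  simp [diracAlong, hfderiv]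

theorem laplaceAlong_lapSeries (hc : HasFactorialDecay c) (hz : z ∈ lapDomain e g) :
    laplaceAlong (fun i => (e i, (0 : ℝ))) (lapSeries c e g) z =
      lapSeries c e (laplaceAlong e g) z := by
  have hsecond (i : ι) : dirDeriv (e i, (0 : ℝ)) (dirDeriv (e i, 0) (lapSeries c e g)) z =
      lapSeries c e (dirDeriv (e i) (dirDeriv (e i) g)) z :=
    (eqOn_dirDeriv isOpen_lapDomain (fun w hw => dirDeriv_base_lapSeries hc hw (e i)) _ hz).trans
      (dirDeriv_base_lapSeries hc (lapDomain_subset_dirDeriv _ hz) _)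
  simp only [laplaceAlong, hsecond]
  refine (hasSum_sum fun i _ => hasSum_lapSeries hc (lapDomain_subset_dirDeriv _
    (lapDomain_subset_dirDeriv _ hz))).unique ?_
  convert hasSum_lapSeries hc (lapDomain_subset_laplaceAlong hz) using 2 with k
  obtain ⟨V, _, hV, hzV, hg, -⟩ := hz
  rw [← sum_iterate_laplaceAlong_dirDeriv_dirDeriv hV hg.contDiffOn k hzV, Finset.smul_sum]

end LapSeriesDerivatives

section RadialLaplacian

variable {E F ι : Type*} [NormedAddCommGroup E] [NormedSpace ℝ E]
  [NormedAddCommGroup F] [NormedSpace ℝ F] [Fintype ι] {e : ι → E} {Φ : E × ℝ → F}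
  {W : Set (E × ℝ)} {α : ℝ}

/-- The operator `4t ∂_t² + α ∂_t + Δ_y` on functions of `(y, t)`. In the variable `t = |x|²` with
`x ∈ ℝⁿ`, the Laplacian of `ℝⁿ` is `4t ∂_t² + 2n ∂_t`. -/
noncomputable def radialLaplacian (e : ι → E) (α : ℝ) (Φ : E × ℝ → F) (z : E × ℝ) : F :=
  (4 * z.2) • dirDeriv (0, 1) (dirDeriv (0, 1) Φ) z + α • dirDeriv (0, 1) Φ z +
    laplaceAlong (fun i => (e i, (0 : ℝ))) Φ z

theorem radialLaplacian_eq_add_smul_dirDeriv (α β : ℝ) (z : E × ℝ) :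
    radialLaplacian e β Φ z = radialLaplacian e α Φ z + (β - α) • dirDeriv (0, 1) Φ z := by
  simp only [radialLaplacian, sub_smul]
  abel

theorem radialLaplacian_zero (e : ι → E) (α : ℝ) :
    radialLaplacian e α (0 : E × ℝ → F) = 0 := by
  have hdir (a : E × ℝ) : dirDeriv a (0 : E × ℝ → F) = 0 := by
    funext z
    simp [dirDeriv]
  funext z
  simp [radialLaplacian, laplaceAlong, hdir]

theorem dirDeriv_radialLaplacian (hW : IsOpen W) (hΦ : ContDiffOn ℝ ∞ Φ W) :
    Set.EqOn (dirDeriv (0, 1) (radialLaplacian e α Φ))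
      (radialLaplacian e (α + 4) (dirDeriv (0, 1) Φ)) W := fun z hz => by
  have hΦt := contDiffOn_dirDeriv hW hΦ (0, 1)
  have hΦtt := contDiffOn_dirDeriv hW hΦt (0, 1)
  have hdiff {Ψ : E × ℝ → F} (h : ContDiffOn ℝ ∞ Ψ W) : DifferentiableAt ℝ Ψ z :=
    differentiableAt_of_contDiffOn_infty hW h hz
  have hcoeff : DifferentiableAt ℝ (fun w : E × ℝ => 4 * w.2) z := by fun_prop
  have hfour : dirDeriv (0, 1) (fun w : E × ℝ => 4 * w.2) z = 4 := by
    rw [dirDeriv, (hasFDerivAt_snd.const_mul (4 : ℝ)).fderiv]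
    simp
  have h₂ := dirDeriv_smul_apply hcoeff (hdiff hΦtt) ((0 : E), (1 : ℝ))
  have h₁ := dirDeriv_const_smul_apply (hdiff hΦt) α ((0 : E), (1 : ℝ))
  have h₀ := dirDeriv_laplaceAlong (e := fun i => (e i, (0 : ℝ))) hW hΦ (0, 1) hz
  have hadd := dirDeriv_add_apply
    ((hcoeff.smul (hdiff hΦtt)).add ((hdiff hΦt).const_smul α))
    (hdiff (contDiffOn_laplaceAlong (e := fun i => (e i, (0 : ℝ))) hW hΦ)) ((0 : E), (1 : ℝ))
  have hadd' := dirDeriv_add_apply (hcoeff.smul (hdiff hΦtt)) ((hdiff hΦt).const_smul α)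
    ((0 : E), (1 : ℝ))
  refine hadd.trans ?_
  refine (congrArg₂ (· + ·) (hadd'.trans (congrArg₂ (· + ·) h₂ h₁)) h₀).trans ?_
  simp only [radialLaplacian, hfour, add_smul]
  abel

theorem contDiffOn_iterate_dirDeriv (hW : IsOpen W) (hΦ : ContDiffOn ℝ ∞ Φ W) (a : E × ℝ) (j : ℕ) :
    ContDiffOn ℝ ∞ ((dirDeriv a)^[j] Φ) W := by
  induction j with
  | zero => exact hΦ
  | succ j ih =>
    rw [Function.iterate_succ_apply']
    exact contDiffOn_dirDeriv hW ih a

theorem radialLaplacian_iterate_dirDeriv_eq_zero (hW : IsOpen W) (hΦ : ContDiffOn ℝ ∞ Φ W)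
    (h : Set.EqOn (radialLaplacian e α Φ) 0 W) (j : ℕ) :
    Set.EqOn (radialLaplacian e (α + 4 * j) ((dirDeriv (0, 1))^[j] Φ)) 0 W := by
  induction j with
  | zero => simpa using h
  | succ j ih =>
    intro z hz
    rw [Function.iterate_succ_apply', Nat.cast_succ, mul_add, mul_one, ← add_assoc,
      ← dirDeriv_radialLaplacian hW (contDiffOn_iterate_dirDeriv hW hΦ _ j) hz,
      eqOn_dirDeriv hW ih _ hz]
    simp [dirDeriv]

theorem radialLaplacian_lapSeries [CompleteSpace F] {g : E → F} {c : ℕ → ℝ} {z : E × ℝ}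
    (hc : HasFactorialDecay c) (hrec : ∀ k : ℕ, (k + 1) * (4 * k + α) * c (k + 1) = -c k)
    (hz : z ∈ lapDomain e g) : radialLaplacian e α (lapSeries c e g) z = 0 := by
  have hΔ := lapDomain_subset_laplaceAlong hz
  rw [radialLaplacian, dirDeriv_vert_lapSeries hc hz, laplaceAlong_lapSeries hc hz,
    eqOn_dirDeriv isOpen_lapDomain (fun w hw => dirDeriv_vert_lapSeries hc hw) _ hz,
    dirDeriv_vert_lapSeries hc.derivCoeff hΔ, mul_smul]
  refine ((((hasSum_smul_lapSeries hc.derivCoeff hΔ).const_smul (4 : ℝ)).add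
    ((hasSum_lapSeries hc.derivCoeff hΔ).const_smul α)).add (hasSum_lapSeries hc hΔ)).unique ?_
  convert hasSum_zero with k
  rw [smul_smul, smul_smul, ← add_smul, ← add_smul]
  convert zero_smul ℝ _
  simp only [derivCoeff]
  linear_combination z.2 ^ k * hrec k

end RadialLaplacian

section CauchyRiemann

variable {E F G ι : Type*} [NormedAddCommGroup E] [NormedSpace ℝ E]
  [NormedAddCommGroup F] [NormedSpace ℝ F] [CompleteSpace F] [NormedAddCommGroup G]
  [NormedSpace ℝ G] [CompleteSpace G] [Fintype ι] {e : ι → E} {g : E → F} {z : E × ℝ}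

/-- The coefficients of `cos √t`, the even half of the Cauchy-Kovalevskaya extension. -/
noncomputable def cosCoeff (k : ℕ) : ℝ := (-1) ^ k / (2 * k).factorial

/-- The coefficients of `sin √t / √t`, the odd half of the Cauchy-Kovalevskaya extension. -/
noncomputable def sinCoeff (k : ℕ) : ℝ := (-1) ^ k / (2 * k + 1).factorial

theorem cosCoeff_eq (k : ℕ) : cosCoeff k = sinCoeff k + 2 * (k * sinCoeff k) := by
  rw [cosCoeff, sinCoeff, Nat.factorial_succ]
  push_cast
  field_simp
  ring

theorem two_mul_derivCoeff_cosCoeff (k : ℕ) : 2 * derivCoeff cosCoeff k = -sinCoeff k := by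
  have hfactorial : ((2 * (k + 1)).factorial : ℝ) = (2 * k + 2) * (2 * k + 1).factorial := by
    rw [show 2 * (k + 1) = 2 * k + 1 + 1 by ring, Nat.factorial_succ]
    push_cast
    ring
  rw [derivCoeff, cosCoeff, sinCoeff, hfactorial]
  field_simp
  ring

theorem cosCoeff_rec (k : ℕ) : (k + 1) * (4 * k + 2) * cosCoeff (k + 1) = -cosCoeff k := by
  have h := two_mul_derivCoeff_cosCoeff k
  rw [derivCoeff] at h
  linear_combination (2 * k + 1) * h + cosCoeff_eq k

theorem sinCoeff_rec (k : ℕ) : (k + 1) * (4 * k + 6) * sinCoeff (k + 1) = -sinCoeff k := by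
  have h := two_mul_derivCoeff_cosCoeff k
  rw [derivCoeff, cosCoeff_eq] at h
  push_cast at h
  linear_combination h

theorem hasFactorialDecay_cosCoeff : HasFactorialDecay cosCoeff :=
  ⟨1, fun k => by rw [cosCoeff, abs_div]; simp [Nat.factorial_ne_zero]⟩

theorem hasFactorialDecay_sinCoeff : HasFactorialDecay sinCoeff := by
  refine ⟨1, fun k => ?_⟩
  rw [sinCoeff, abs_div, abs_pow, abs_neg, abs_one, one_pow, Nat.abs_cast, div_mul_eq_mul_div,
    one_mul, div_le_one (by positivity)]
  exact_mod_cast Nat.factorial_le (Nat.le_succ _)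

theorem diracAlong_lapSeries_cosCoeff (J : ι → F →L[ℝ] G) (hz : z ∈ lapDomain e g) :
    diracAlong J (fun i => (e i, (0 : ℝ))) (lapSeries cosCoeff e g) z =
      lapSeries sinCoeff e (diracAlong J e g) z +
        (2 * z.2) • dirDeriv (0, 1) (lapSeries sinCoeff e (diracAlong J e g)) z := by
  have hDz := lapDomain_subset_diracAlong J e hz
  rw [diracAlong_lapSeries hasFactorialDecay_cosCoeff hz,
    dirDeriv_vert_lapSeries hasFactorialDecay_sinCoeff hDz, mul_smul]
  refine (hasSum_lapSeries hasFactorialDecay_cosCoeff hDz).unique ?_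
  convert (hasSum_lapSeries hasFactorialDecay_sinCoeff hDz).add
    ((hasSum_smul_lapSeries hasFactorialDecay_sinCoeff hDz).const_smul (2 : ℝ)) using 2 with k
  rw [smul_smul, ← add_smul, cosCoeff_eq]
  congr 1
  ring

theorem two_smul_dirDeriv_lapSeries_cosCoeff [DecidableEq ι] {J : ι → F →L[ℝ] G}
    {J' : ι → G →L[ℝ] F}
    (hJ : ∀ i j a, J' i (J j a) + J' j (J i a) = if i = j then (2 : ℝ) • a else 0)
    (hz : z ∈ lapDomain e g) :
    (2 : ℝ) • dirDeriv (0, 1) (lapSeries cosCoeff e g) z =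
      -diracAlong J' (fun i => (e i, (0 : ℝ))) (lapSeries sinCoeff e (diracAlong J e g)) z := by
  have hDD : lapSeries sinCoeff e (diracAlong J' e (diracAlong J e g)) z =
      lapSeries sinCoeff e (laplaceAlong e g) z := by
    obtain ⟨V, _, hV, hzV, hg, -⟩ := hz
    exact lapSeries_congr hV (diracAlong_diracAlong hJ hV hg.contDiffOn) hzV
  rw [diracAlong_lapSeries hasFactorialDecay_sinCoeff (lapDomain_subset_diracAlong J e hz), hDD,
    dirDeriv_vert_lapSeries hasFactorialDecay_cosCoeff hz, lapSeries, lapSeries,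
    ← tsum_const_smul'', ← tsum_neg]
  refine tsum_congr fun k => ?_
  rw [smul_smul, ← neg_smul, ← mul_assoc, two_mul_derivCoeff_cosCoeff, neg_mul]

end CauchyRiemann

section AxialCoordinates

variable {F : Type*} [NormedAddCommGroup F] [NormedSpace ℝ F]
  {m p : ℕ} {x : Fin (m + 1) → ℝ} {Φ : (Fin (p + 1) → ℝ) × ℝ → F}

/-- The standard basis of `ℝⁿ`, along which `laplaceAlong` is `lapF` and `lapP`. -/
def stdFrame (n : ℕ) (s : Fin n) : Fin n → ℝ := Pi.single s 1

/-- The linear projection `x ↦ x_p`. -/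
noncomputable def projPCLM (m p : ℕ) : (Fin (m + 1) → ℝ) →L[ℝ] (Fin (p + 1) → ℝ) :=
  LinearMap.toContinuousLinearMap
    { toFun := projP m p
      map_add' := fun x y => by ext s; by_cases h : (s : ℕ) < m + 1 <;> simp [projP, h]
      map_smul' := fun r x => by ext s; by_cases h : (s : ℕ) < m + 1 <;> simp [projP, h] }

/-- The linear projection `x ↦ x_q`. -/
noncomputable def xqpartCLM (m p : ℕ) : (Fin (m + 1) → ℝ) →L[ℝ] (Fin (m + 1) → ℝ) :=
  LinearMap.toContinuousLinearMap
    { toFun := xqpart m p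
      map_add' := fun x y => by ext s; by_cases h : (s : ℕ) ≤ p <;> simp [xqpart, h]
      map_smul' := fun r x => by ext s; by_cases h : (s : ℕ) ≤ p <;> simp [xqpart, h] }

/-- The coordinates `(x_p, t)`, `t = |x_q|²`, of which the two halves of an axially symmetric
function are functions. -/
def axialCoord (m p : ℕ) (x : Fin (m + 1) → ℝ) : (Fin (p + 1) → ℝ) × ℝ :=
  (projP m p x, ∑ s, xqpart m p x s ^ 2)

theorem xqpart_eq_zero_of_le {s : Fin (m + 1)} (hs : (s : ℕ) ≤ p) : xqpart m p x s = 0 :=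
  if_pos hs

theorem xqpart_eq_self_of_lt {s : Fin (m + 1)} (hs : p < s) : xqpart m p x s = x s :=
  if_neg hs.not_ge

theorem projP_stdFrame_castLE (hp : p < m) (s : Fin (p + 1)) :
    projP m p (stdFrame (m + 1) (s.castLE (by omega))) = stdFrame (p + 1) s := by
  funext t
  have ht : (t : ℕ) < m + 1 := by omega
  simp [projP, stdFrame, ht, Pi.single_apply, Fin.ext_iff]

theorem projP_stdFrame_of_lt {s : Fin (m + 1)} (hs : p < s) :
    projP m p (stdFrame (m + 1) s) = 0 := by
  funext t
  have ht : (t : ℕ) ≠ s := by omega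
  simp [projP, stdFrame, Fin.ext_iff, ht]

theorem xqpart_stdFrame_of_le {s : Fin (m + 1)} (hs : (s : ℕ) ≤ p) :
    xqpart m p (stdFrame (m + 1) s) = 0 := by
  funext t
  rcases eq_or_ne t s with rfl | hts
  · exact xqpart_eq_zero_of_le hs
  · simp [xqpart, stdFrame, hts]

theorem xqpart_stdFrame_of_lt {s : Fin (m + 1)} (hs : p < s) :
    xqpart m p (stdFrame (m + 1) s) = stdFrame (m + 1) s := by
  funext t
  rcases eq_or_ne t s with rfl | hts
  · exact xqpart_eq_self_of_lt hs
  · simp [xqpart, stdFrame, hts]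

theorem hasFDerivAt_axialCoord (x : Fin (m + 1) → ℝ) :
    HasFDerivAt (axialCoord m p) ((projPCLM m p).prod
      (∑ s, (2 * xqpart m p x s) • (ContinuousLinearMap.proj s ∘L xqpartCLM m p))) x := by
  refine (projPCLM m p).hasFDerivAt.prodMk (HasFDerivAt.fun_sum fun s _ => ?_)
  have h : HasFDerivAt (fun x => xqpart m p x s)
      (ContinuousLinearMap.proj (R := ℝ) (φ := fun _ => ℝ) s ∘L xqpartCLM m p) x :=
    (ContinuousLinearMap.proj (R := ℝ) (φ := fun _ => ℝ) s ∘L xqpartCLM m p).hasFDerivAt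
  simpa using h.pow 2

theorem contDiff_axialCoord : ContDiff ℝ ∞ (axialCoord m p) :=
  (projPCLM m p).contDiff.prodMk (ContDiff.sum fun s _ =>
    (ContinuousLinearMap.proj (R := ℝ) (φ := fun _ => ℝ) s ∘L xqpartCLM m p).contDiff.pow 2)

theorem dirDeriv_comp_axialCoord (hΦ : DifferentiableAt ℝ Φ (axialCoord m p x))
    (a : Fin (m + 1) → ℝ) :
    dirDeriv a (fun x => Φ (axialCoord m p x)) x =
      dirDeriv (projP m p a, ∑ s, 2 * xqpart m p x s * xqpart m p a s) Φ (axialCoord m p x) := by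
  have h := (hΦ.hasFDerivAt.comp x (hasFDerivAt_axialCoord x)).fderiv
  refine (DFunLike.congr_fun h a).trans (congrArg (fderiv ℝ Φ _) (Prod.ext rfl ?_))
  simp
  rfl

theorem dirDeriv_castLE_comp_axialCoord (hp : p < m)
    (hΦ : DifferentiableAt ℝ Φ (axialCoord m p x)) (s : Fin (p + 1)) :
    dirDeriv (stdFrame (m + 1) (s.castLE (by omega))) (fun x => Φ (axialCoord m p x)) x =
      dirDeriv (stdFrame (p + 1) s, 0) Φ (axialCoord m p x) := by
  have hs : ((s.castLE (by omega) : Fin (m + 1)) : ℕ) ≤ p := Nat.lt_succ_iff.1 s.isLt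
  simp [dirDeriv_comp_axialCoord hΦ, projP_stdFrame_castLE hp, xqpart_stdFrame_of_le hs]

theorem dirDeriv_of_lt_comp_axialCoord (hΦ : DifferentiableAt ℝ Φ (axialCoord m p x))
    {s : Fin (m + 1)} (hs : p < s) :
    dirDeriv (stdFrame (m + 1) s) (fun x => Φ (axialCoord m p x)) x =
      (2 * x s) • dirDeriv (0, 1) Φ (axialCoord m p x) := by
  have hvert : ((0, 2 * x s) : (Fin (p + 1) → ℝ) × ℝ) = (2 * x s) • (0, 1) := by simp
  have hsum : ∑ t, 2 * xqpart m p x t * stdFrame (m + 1) s t = 2 * x s := by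
    simp [stdFrame, Pi.single_apply, xqpart_eq_self_of_lt hs]
  rw [dirDeriv_comp_axialCoord hΦ, projP_stdFrame_of_lt hs, xqpart_stdFrame_of_lt hs, hsum, hvert,
    dirDeriv, map_smul, dirDeriv]

theorem sum_eq_sum_castLE_add_sum_lt {G : Type*} [AddCommMonoid G] (hp : p < m)
    (f : Fin (m + 1) → G) :
    ∑ s, f s = ∑ s : Fin (p + 1), f (s.castLE (by omega)) +
      ∑ s ∈ Finset.univ.filter (fun s : Fin (m + 1) => p < s), f s := by
  have himage : Finset.univ.map (Fin.castLEEmb (show p + 1 ≤ m + 1 by omega)) =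
      Finset.univ.filter fun s : Fin (m + 1) => ¬ p < (s : ℕ) := by
    ext s
    simp only [Finset.mem_map, Finset.mem_univ, true_and, Finset.mem_filter, not_lt]
    exact ⟨by rintro ⟨t, rfl⟩; exact Nat.lt_succ_iff.1 t.isLt,
      fun h => ⟨⟨s, Nat.lt_succ_iff.2 h⟩, rfl⟩⟩
  rw [← Finset.sum_filter_not_add_sum_filter _ (fun s : Fin (m + 1) => p < (s : ℕ)), ← himage,
    Finset.sum_map]
  rfl

theorem card_filter_lt (hp : p < m) :
    (Finset.univ.filter fun s : Fin (m + 1) => p < s).card = m - p := by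
  have h := sum_eq_sum_castLE_add_sum_lt hp fun _ => 1
  simp only [Finset.sum_const, Finset.card_univ, Fintype.card_fin, smul_eq_mul, mul_one] at h
  omega

theorem rad_sq (x : Fin (m + 1) → ℝ) : rad m p x ^ 2 = (axialCoord m p x).2 :=
  Real.sq_sqrt (Finset.sum_nonneg fun _ _ => sq_nonneg _)

theorem rad_smul_normq (x : Fin (m + 1) → ℝ) : rad m p x • normq m p x = xqpart m p x := by
  rw [normq, smul_smul]
  by_cases h : rad m p x = 0
  · have hsum : ∑ s, xqpart m p x s ^ 2 = 0 := by
      simpa [h, axialCoord] using (rad_sq (p := p) x).symm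
    have hzero : xqpart m p x = 0 := funext fun s => pow_eq_zero_iff two_ne_zero |>.1 <|
      (Finset.sum_eq_zero_iff_of_nonneg fun _ _ => sq_nonneg _).1 hsum s (Finset.mem_univ s)
    rw [hzero, smul_zero]
  · rw [mul_inv_cancel₀ h, one_smul]

theorem xqpart_reflP (x : Fin (m + 1) → ℝ) : xqpart m p (reflP m p x) = -xqpart m p x := by
  funext s
  by_cases h : (s : ℕ) ≤ p <;> simp [xqpart, reflP, h]

theorem axialCoord_reflP (x : Fin (m + 1) → ℝ) :
    axialCoord m p (reflP m p x) = axialCoord m p x := by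
  have hproj : projP m p (reflP m p x) = projP m p x := funext fun s => by
    by_cases h : (s : ℕ) < m + 1 <;> simp [projP, reflP, h, Nat.lt_succ_iff.1 s.isLt]
  simp [axialCoord, hproj, xqpart_reflP]

end AxialCoordinates

section BilinearLaplacian

variable {E F G ι : Type*} [NormedAddCommGroup E] [NormedSpace ℝ E]
  [NormedAddCommGroup F] [NormedSpace ℝ F] [NormedAddCommGroup G] [NormedSpace ℝ G]
  [Fintype ι] {e : ι → E} {V : Set E} {u : E → F} {x : E}

theorem laplaceAlong_const_smul (c : ℝ) (hV : IsOpen V) (hu : ContDiffOn ℝ ∞ u V) :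
    Set.EqOn (laplaceAlong e fun x => c • u x) (fun x => c • laplaceAlong e u x) V :=
  laplaceAlong_clm (c • ContinuousLinearMap.id ℝ F) hV hu

theorem dirDeriv_clm₂_apply (B : E →L[ℝ] F →L[ℝ] G) (hu : DifferentiableAt ℝ u x) (a : E) :
    dirDeriv a (fun y => B y (u y)) x = B x (dirDeriv a u x) + B a (u x) := by
  rw [dirDeriv, (B.hasFDerivAt.clm_apply hu.hasFDerivAt).fderiv]
  simp [dirDeriv]

theorem laplaceAlong_clm₂_apply (B : E →L[ℝ] F →L[ℝ] G) (hV : IsOpen V)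
    (hu : ContDiffOn ℝ ∞ u V) :
    Set.EqOn (laplaceAlong e fun x => B x (u x))
      (fun x => B x (laplaceAlong e u x) + (2 : ℝ) • ∑ i, B (e i) (dirDeriv (e i) u x)) V :=
  fun x hx => by
  have hdiff {f : E → F} (hf : ContDiffOn ℝ ∞ f V) : ∀ y ∈ V, DifferentiableAt ℝ f y :=
    fun _ hy => differentiableAt_of_contDiffOn_infty hV hf hy
  have hsecond (a : E) : dirDeriv a (dirDeriv a fun x => B x (u x)) x =
      B x (dirDeriv a (dirDeriv a u) x) + (2 : ℝ) • B a (dirDeriv a u x) := by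
    have hua := hdiff (contDiffOn_dirDeriv hV hu a) x hx
    have hBu : DifferentiableAt ℝ (fun y => B a (u y)) x :=
      (B a).differentiableAt.comp x (hdiff hu x hx)
    rw [eqOn_dirDeriv hV (fun y hy => dirDeriv_clm₂_apply B (hdiff hu y hy) a) a hx,
      dirDeriv_add_apply (B.differentiableAt.clm_apply hua) hBu, dirDeriv_clm₂_apply B hua,
      dirDeriv_clm_apply (B a) (hdiff hu x hx), add_assoc, two_smul]
  simp only [laplaceAlong, hsecond, Finset.sum_add_distrib, map_sum, Finset.smul_sum]

end BilinearLaplacian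

section AxialFunctions

variable {F G : Type*} [NormedAddCommGroup F] [NormedSpace ℝ F]
  [NormedAddCommGroup G] [NormedSpace ℝ G] {m p : ℕ} {W : Set ((Fin (p + 1) → ℝ) × ℝ)}
  {Φ : (Fin (p + 1) → ℝ) × ℝ → G} {Ψ : (Fin (p + 1) → ℝ) × ℝ → F}
  {B : (Fin (m + 1) → ℝ) →L[ℝ] F →L[ℝ] G} {α : ℝ}

theorem isOpen_preimage_axialCoord (hW : IsOpen W) : IsOpen (axialCoord m p ⁻¹' W) :=
  hW.preimage contDiff_axialCoord.continuous

theorem contDiffOn_comp_axialCoord (hΨ : ContDiffOn ℝ ∞ Ψ W) :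
    ContDiffOn ℝ ∞ (fun x => Ψ (axialCoord m p x)) (axialCoord m p ⁻¹' W) :=
  hΨ.comp contDiff_axialCoord.contDiffOn fun _ hx => hx

theorem axialCoord_snd_eq_sum_lt (x : Fin (m + 1) → ℝ) :
    (axialCoord m p x).2 = ∑ s ∈ Finset.univ.filter (fun s : Fin (m + 1) => p < s), x s ^ 2 := by
  have hterm (s : Fin (m + 1)) : xqpart m p x s ^ 2 = if p < (s : ℕ) then x s ^ 2 else 0 := by
    split_ifs with hs
    · rw [xqpart_eq_self_of_lt hs]
    · rw [xqpart_eq_zero_of_le (not_lt.1 hs), zero_pow two_ne_zero]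
  simp only [axialCoord, hterm, Finset.sum_filter]

theorem dirDeriv_dirDeriv_of_lt_comp_axialCoord (hW : IsOpen W) (hΨ : ContDiffOn ℝ ∞ Ψ W)
    {x : Fin (m + 1) → ℝ} (hx : x ∈ axialCoord m p ⁻¹' W) {s : Fin (m + 1)} (hs : p < s) :
    dirDeriv (stdFrame (m + 1) s)
        (dirDeriv (stdFrame (m + 1) s) fun x => Ψ (axialCoord m p x)) x =
      (4 * x s ^ 2) • dirDeriv (0, 1) (dirDeriv (0, 1) Ψ) (axialCoord m p x) +
        (2 : ℝ) • dirDeriv (0, 1) Ψ (axialCoord m p x) := by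
  have hW' := isOpen_preimage_axialCoord (m := m) hW
  have ht := contDiffOn_dirDeriv hW hΨ (0, 1)
  have hcoord : HasFDerivAt (fun x : Fin (m + 1) → ℝ => 2 * x s)
      ((2 : ℝ) • ContinuousLinearMap.proj (R := ℝ) (φ := fun _ => ℝ) s) x :=
    ((2 : ℝ) • ContinuousLinearMap.proj (R := ℝ) (φ := fun _ => ℝ) s).hasFDerivAt
  have htwo : dirDeriv (stdFrame (m + 1) s) (fun x : Fin (m + 1) → ℝ => 2 * x s) x = 2 := by
    rw [dirDeriv, hcoord.fderiv]
    simp [stdFrame]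
  rw [eqOn_dirDeriv hW' (fun y hy => dirDeriv_of_lt_comp_axialCoord
      (differentiableAt_of_contDiffOn_infty hW hΨ hy) hs) _ hx,
    dirDeriv_smul_apply hcoord.differentiableAt (differentiableAt_of_contDiffOn_infty hW'
      (contDiffOn_comp_axialCoord ht) hx), htwo, dirDeriv_of_lt_comp_axialCoord
      (differentiableAt_of_contDiffOn_infty hW ht hx) hs, smul_smul]
  congr 2
  ring

theorem laplaceAlong_comp_axialCoord (hp : p < m) (hW : IsOpen W) (hΨ : ContDiffOn ℝ ∞ Ψ W) :
    Set.EqOn (laplaceAlong (stdFrame (m + 1)) fun x => Ψ (axialCoord m p x))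
      (fun x => radialLaplacian (stdFrame (p + 1)) (2 * (m - p : ℕ)) Ψ (axialCoord m p x))
      (axialCoord m p ⁻¹' W) := fun x hx => by
  have hbase (s : Fin (p + 1)) : dirDeriv (stdFrame (m + 1) (s.castLE (by omega)))
      (dirDeriv (stdFrame (m + 1) (s.castLE (by omega))) fun x => Ψ (axialCoord m p x)) x =
      dirDeriv (stdFrame (p + 1) s, 0) (dirDeriv (stdFrame (p + 1) s, 0) Ψ)
        (axialCoord m p x) :=
    (eqOn_dirDeriv (isOpen_preimage_axialCoord hW) (fun y hy => dirDeriv_castLE_comp_axialCoord hp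
      (differentiableAt_of_contDiffOn_infty hW hΨ hy) s) _ hx).trans
      (dirDeriv_castLE_comp_axialCoord hp (differentiableAt_of_contDiffOn_infty hW
        (contDiffOn_dirDeriv hW hΨ _) hx) s)
  have hvert := Finset.sum_congr rfl
    fun s (hs : s ∈ Finset.univ.filter fun s : Fin (m + 1) => p < s) =>
      dirDeriv_dirDeriv_of_lt_comp_axialCoord hW hΨ hx (Finset.mem_filter.1 hs).2
  rw [laplaceAlong, sum_eq_sum_castLE_add_sum_lt hp, Finset.sum_congr rfl fun s _ => hbase s, hvert,
    Finset.sum_add_distrib, ← Finset.sum_smul, ← Finset.mul_sum, ← axialCoord_snd_eq_sum_lt,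
    Finset.sum_const, card_filter_lt hp, ← Nat.cast_smul_eq_nsmul ℝ, smul_smul,
    mul_comm ((m - p : ℕ) : ℝ) 2, add_comm]
  rfl

theorem laplaceAlong_clm₂_comp_axialCoord (hp : p < m)
    (hB : ∀ s : Fin (m + 1), (s : ℕ) ≤ p → B (stdFrame (m + 1) s) = 0) (hW : IsOpen W)
    (hΨ : ContDiffOn ℝ ∞ Ψ W) :
    Set.EqOn (laplaceAlong (stdFrame (m + 1)) fun x => B x (Ψ (axialCoord m p x)))
      (fun x => B x (radialLaplacian (stdFrame (p + 1)) (2 * (m - p : ℕ) + 4) Ψ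
        (axialCoord m p x))) (axialCoord m p ⁻¹' W) := fun x hx => by
  have hterm (s : Fin (m + 1)) : B (stdFrame (m + 1) s)
      (dirDeriv (stdFrame (m + 1) s) (fun x => Ψ (axialCoord m p x)) x) =
      B (x s • stdFrame (m + 1) s) ((2 : ℝ) • dirDeriv (0, 1) Ψ (axialCoord m p x)) := by
    rcases le_or_gt (s : ℕ) p with hs | hs
    · simp [hB s hs]
    · rw [dirDeriv_of_lt_comp_axialCoord (differentiableAt_of_contDiffOn_infty hW hΨ hx) hs,
        mul_comm, mul_smul, map_smul, map_smul B, smul_apply]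
  have hexpand : ∑ s, x s • stdFrame (m + 1) s = x := (pi_eq_sum_univ' x).symm
  refine (laplaceAlong_clm₂_apply B (isOpen_preimage_axialCoord hW)
    (contDiffOn_comp_axialCoord hΨ) hx).trans ?_
  simp only [hterm]
  rw [← sum_apply, ← map_sum, hexpand,
    laplaceAlong_comp_axialCoord hp hW hΨ hx, ← map_smul, ← map_add, smul_smul,
    radialLaplacian_eq_add_smul_dirDeriv (2 * (m - p : ℕ)) (2 * (m - p : ℕ) + 4)]
  norm_num

/-- The function `Φ(x_p, |x_q|²) + B(x, Ψ(x_p, |x_q|²))`, the shape of a generalized partial-slice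
function when `B(x, ·)` is multiplication by `x_q`. -/
noncomputable def axialFun (B : (Fin (m + 1) → ℝ) →L[ℝ] F →L[ℝ] G) (Φ : (Fin (p + 1) → ℝ) × ℝ → G)
    (Ψ : (Fin (p + 1) → ℝ) × ℝ → F) (x : Fin (m + 1) → ℝ) : G :=
  Φ (axialCoord m p x) + B x (Ψ (axialCoord m p x))

theorem contDiffOn_clm₂_comp_axialCoord (hΨ : ContDiffOn ℝ ∞ Ψ W) :
    ContDiffOn ℝ ∞ (fun x => B x (Ψ (axialCoord m p x))) (axialCoord m p ⁻¹' W) :=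
  B.contDiff.contDiffOn.clm_apply (contDiffOn_comp_axialCoord hΨ)

theorem contDiffOn_axialFun (hΦ : ContDiffOn ℝ ∞ Φ W) (hΨ : ContDiffOn ℝ ∞ Ψ W) :
    ContDiffOn ℝ ∞ (axialFun B Φ Ψ) (axialCoord m p ⁻¹' W) :=
  (contDiffOn_comp_axialCoord hΦ).add (contDiffOn_clm₂_comp_axialCoord hΨ)

theorem laplaceAlong_axialFun (hp : p < m)
    (hB : ∀ s : Fin (m + 1), (s : ℕ) ≤ p → B (stdFrame (m + 1) s) = 0) (hW : IsOpen W)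
    (hΦ : ContDiffOn ℝ ∞ Φ W) (hΨ : ContDiffOn ℝ ∞ Ψ W)
    (hΦ₀ : Set.EqOn (radialLaplacian (stdFrame (p + 1)) α Φ) 0 W)
    (hΨ₀ : Set.EqOn (radialLaplacian (stdFrame (p + 1)) (α + 4) Ψ) 0 W) :
    Set.EqOn (laplaceAlong (stdFrame (m + 1)) (axialFun B Φ Ψ))
      (fun x => (2 * (m - p : ℕ) - α) • axialFun B (dirDeriv (0, 1) Φ) (dirDeriv (0, 1) Ψ) x)
      (axialCoord m p ⁻¹' W) := fun x hx => by
  refine (laplaceAlong_add (isOpen_preimage_axialCoord hW) (contDiffOn_comp_axialCoord hΦ)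
    (contDiffOn_clm₂_comp_axialCoord hΨ) hx).trans ?_
  simp only [laplaceAlong_comp_axialCoord hp hW hΦ hx,
    laplaceAlong_clm₂_comp_axialCoord hp hB hW hΨ hx]
  rw [radialLaplacian_eq_add_smul_dirDeriv α, radialLaplacian_eq_add_smul_dirDeriv (α + 4) (_ + 4),
    hΦ₀ hx, hΨ₀ hx]
  simp only [axialFun, smul_add, Pi.zero_apply, zero_add, add_sub_add_right_eq_sub, map_smul]

theorem iterate_laplaceAlong_axialFun (hp : p < m)
    (hB : ∀ s : Fin (m + 1), (s : ℕ) ≤ p → B (stdFrame (m + 1) s) = 0) (hW : IsOpen W)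
    (hΦ : ContDiffOn ℝ ∞ Φ W) (hΨ : ContDiffOn ℝ ∞ Ψ W)
    (hΦ₀ : Set.EqOn (radialLaplacian (stdFrame (p + 1)) α Φ) 0 W)
    (hΨ₀ : Set.EqOn (radialLaplacian (stdFrame (p + 1)) (α + 4) Ψ) 0 W) (k : ℕ) :
    Set.EqOn ((laplaceAlong (stdFrame (m + 1)))^[k] (axialFun B Φ Ψ))
      (fun x => (∏ j ∈ Finset.range k, (2 * (m - p : ℕ) - (α + 4 * j))) •
        axialFun B ((dirDeriv (0, 1))^[k] Φ) ((dirDeriv (0, 1))^[k] Ψ) x)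
      (axialCoord m p ⁻¹' W) := by
  have hW' := isOpen_preimage_axialCoord (m := m) hW
  induction k with
  | zero => simp [Set.EqOn]
  | succ k ih =>
    intro x hx
    have hΦk := contDiffOn_iterate_dirDeriv hW hΦ (0, 1) k
    have hΨk := contDiffOn_iterate_dirDeriv hW hΨ (0, 1) k
    have hΨk₀ := radialLaplacian_iterate_dirDeriv_eq_zero hW hΨ hΨ₀ k
    rw [add_right_comm] at hΨk₀
    simp only [Function.iterate_succ_apply']
    rw [eqOn_laplaceAlong hW' ih hx,
      laplaceAlong_const_smul _ hW' (contDiffOn_axialFun hΦk hΨk) hx]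
    simp only [laplaceAlong_axialFun hp hB hW hΦk hΨk
      (radialLaplacian_iterate_dirDeriv_eq_zero hW hΦ hΦ₀ k) hΨk₀ hx, smul_smul,
      Finset.prod_range_succ]

theorem harmonic_of_eqOn_smul_axialFun {f : (Fin (m + 1) → ℝ) → G} {c : ℝ} (hp : p < m)
    (hB : ∀ s : Fin (m + 1), (s : ℕ) ≤ p → B (stdFrame (m + 1) s) = 0) (hW : IsOpen W)
    (hΦ : ContDiffOn ℝ ∞ Φ W) (hΨ : ContDiffOn ℝ ∞ Ψ W)
    (hΦ₀ : Set.EqOn (radialLaplacian (stdFrame (p + 1)) (2 * (m - p : ℕ)) Φ) 0 W)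
    (hΨ₀ : Set.EqOn (radialLaplacian (stdFrame (p + 1)) (2 * (m - p : ℕ) + 4) Ψ) 0 W)
    (hf : Set.EqOn f (fun x => c • axialFun B Φ Ψ x) (axialCoord m p ⁻¹' W)) :
    Harmonic m f (axialCoord m p ⁻¹' W) := by
  have hW' := isOpen_preimage_axialCoord (m := m) hW
  have hsmooth := contDiffOn_axialFun (B := B) hΦ hΨ
  refine ⟨((hsmooth.const_smul c).of_le ENat.LEInfty.out).congr hf, fun x hx => ?_⟩
  calc lapF m f x
      = c • laplaceAlong (stdFrame (m + 1)) (axialFun B Φ Ψ) x :=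
        (eqOn_laplaceAlong hW' hf hx).trans (laplaceAlong_const_smul c hW' hsmooth hx)
    _ = 0 := by
        simp [laplaceAlong_axialFun hp hB hW hΦ hΨ hΦ₀ hΨ₀ hx]

end AxialFunctions

section AlternativeAlgebra

variable {A : Type*} [NormedAddCommGroup A] [NormedSpace ℝ A] [Mul A] [One A] {conj : A → A}
  {v : ℕ → A} {m p : ℕ} {w x y : Fin (m + 1) → ℝ}

namespace IsAltStarAlg

/-- Multiplication as a continuous bilinear map. -/
noncomputable def mulCLM (H : IsAltStarAlg A conj) : A →L[ℝ] A →L[ℝ] A :=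
  haveI := H.finDim
  (LinearMap.mk₂ ℝ (· * ·) H.add_mul' H.smul_mul' H.mul_add' H.mul_smul').toContinuousBilinearMap

theorem mulCLM_apply (H : IsAltStarAlg A conj) (a b : A) : H.mulCLM a b = a * b := rfl

theorem neg_mul (H : IsAltStarAlg A conj) (a b : A) : -a * b = -(a * b) := by
  simpa using H.smul_mul' (-1) a b

theorem mul_neg (H : IsAltStarAlg A conj) (a b : A) : a * -b = -(a * b) := by
  simpa using H.mul_smul' (-1) a b

theorem zero_mul (H : IsAltStarAlg A conj) (a : A) : 0 * a = 0 := by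
  simpa using H.smul_mul' 0 0 a

theorem one_ne_zero (H : IsAltStarAlg A conj) : (1 : A) ≠ 0 := fun h => by
  have hzero (a : A) : a = 0 := by rw [← H.one_mul' a, h, H.zero_mul]
  have : Subsingleton A := ⟨fun a b => (hzero a).trans (hzero b).symm⟩
  exact absurd H.one_lt_finrank (by simp [Module.finrank_zero_of_subsingleton])

theorem mul_mul_add_mul_mul (H : IsAltStarAlg A conj) (a b c : A) :
    a * (b * c) + b * (a * c) = (a * b + b * a) * c := by
  have h := H.alt_left (a + b) c
  simp only [H.add_mul', H.mul_add', H.alt_left] at h ⊢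
  linear_combination (norm := module) h

end IsAltStarAlg

namespace IsHypBasis

theorem conj_of_pos (hv : IsHypBasis A conj v m) {s : ℕ} (hs : 1 ≤ s) (hsm : s ≤ m) :
    conj (v s) = -v s :=
  eq_neg_of_add_eq_zero_right (hv.trace_zero s hs hsm)

theorem mul_add_mul (H : IsAltStarAlg A conj) (hv : IsHypBasis A conj v m) {s t : ℕ} (hs : 1 ≤ s)
    (hsm : s ≤ m) (ht : 1 ≤ t) (htm : t ≤ m) :
    v s * v t + v t * v s = if s = t then (-2 : ℝ) • (1 : A) else 0 := by
  split_ifs with hst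
  · subst hst
    have hsq : -(v s * v s) = 1 := by
      rw [← H.mul_neg, ← hv.conj_of_pos hs hsm, hv.norm_one s hs hsm]
    rw [← hsq]
    module
  · rw [hv.anticomm s t hs hsm ht htm hst, neg_add_cancel]

theorem conj_mul_mul_add_conj_mul_mul (H : IsAltStarAlg A conj) (hv : IsHypBasis A conj v m)
    {s t : ℕ} (hs : s ≤ m) (ht : t ≤ m) (a : A) :
    conj (v s) * (v t * a) + conj (v t) * (v s * a) = if s = t then (2 : ℝ) • a else 0 := by
  rcases Nat.eq_zero_or_pos s with rfl | hs0 <;> rcases Nat.eq_zero_or_pos t with rfl | ht0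
  · simp [hv.v_zero, H.conj_one, H.one_mul', two_smul]
  · simp [hv.v_zero, H.conj_one, H.one_mul', hv.conj_of_pos ht0 ht, H.neg_mul, ht0.ne]
  · simp [hv.v_zero, H.conj_one, H.one_mul', hv.conj_of_pos hs0 hs, H.neg_mul, hs0.ne']
  · rw [hv.conj_of_pos hs0 hs, hv.conj_of_pos ht0 ht, H.neg_mul, H.neg_mul, ← neg_add,
      H.mul_mul_add_mul_mul, hv.mul_add_mul H hs0 hs ht0 ht]
    split_ifs
    · rw [H.smul_mul', H.one_mul', neg_smul, neg_neg]
    · rw [H.zero_mul, neg_zero]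

theorem emb_mul_emb_add (H : IsAltStarAlg A conj) (hv : IsHypBasis A conj v m)
    (hx : x 0 = 0) (hy : y 0 = 0) :
    emb v m x * emb v m y + emb v m y * emb v m x = (-2 * ∑ s, x s * y s) • (1 : A) := by
  have hexpand (x y : Fin (m + 1) → ℝ) :
      emb v m x * emb v m y = ∑ s : Fin (m + 1), ∑ t : Fin (m + 1), (x s * y t) • (v s * v t) := by
    simp only [← H.mulCLM_apply, emb, map_sum, map_smul, sum_apply, smul_apply,
      Finset.smul_sum, smul_smul]
    rw [Finset.sum_comm]
    simp only [mul_comm]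
  have hterm (s t : Fin (m + 1)) : (x s * y t) • (v s * v t) + (y t * x s) • (v t * v s) =
      if s = t then (-2 * (x s * y t)) • (1 : A) else 0 := by
    rcases eq_or_ne s 0 with rfl | hs
    · simp [hx]
    rcases eq_or_ne t 0 with rfl | ht
    · simp [hy]
    rw [mul_comm (y t), ← smul_add, hv.mul_add_mul H (Fin.val_pos_iff.2 (Fin.pos_of_ne_zero hs))
      s.is_le (Fin.val_pos_iff.2 (Fin.pos_of_ne_zero ht)) t.is_le, smul_ite, smul_zero, smul_smul,
      mul_comm (x s * y t)]
    simp only [Fin.ext_iff]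
  rw [hexpand x y, hexpand y x,
    Finset.sum_comm (γ := Fin (m + 1)) (f := fun s t => (y s * x t) • _),
    ← Finset.sum_add_distrib]
  simp only [← Finset.sum_add_distrib, hterm, Finset.sum_ite_eq, Finset.mem_univ, if_true,
    ← Finset.sum_smul, Finset.mul_sum]

theorem sum_sq_of_mem_Sph (H : IsAltStarAlg A conj) (hv : IsHypBasis A conj v m)
    (hw : w ∈ Sph v m p) : ∑ s, w s ^ 2 = 1 := by
  have hw0 : w 0 = 0 := hw.1 0 (Nat.zero_le p)
  have h := hv.emb_mul_emb_add H hw0 hw0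
  rw [hw.2] at h
  have hzero : (2 * (∑ s, w s * w s - 1)) • (1 : A) = 0 := by
    linear_combination (norm := module) h
  have := (smul_eq_zero.1 hzero).resolve_right H.one_ne_zero
  simp only [sq]
  linarith

theorem mul_emb_mul_of_mem_Sph (H : IsAltStarAlg A conj) (hv : IsHypBasis A conj v m) (hp : p < m)
    (hw : w ∈ Sph v m p) {s : ℕ} (hs : s ≤ p) (a : A) :
    v s * (emb v m w * a) = emb v m w * (conj (v s) * a) := by
  rcases Nat.eq_zero_or_pos s with rfl | hs0
  · simp [hv.v_zero, H.conj_one, H.one_mul']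
  let i : Fin (m + 1) := ⟨s, by omega⟩
  have hi : emb v m (stdFrame (m + 1) i) = v s := by simp [emb, stdFrame, Pi.single_apply, i]
  have hanti : v s * emb v m w + emb v m w * v s = 0 := by
    have hi0 : stdFrame (m + 1) i 0 = 0 :=
      Pi.single_eq_of_ne (fun h => hs0.ne (congrArg Fin.val h)) 1
    have h := hv.emb_mul_emb_add H hi0 (hw.1 0 (Nat.zero_le p))
    rw [hi] at h
    simpa [stdFrame, Pi.single_apply, hw.1 i hs] using h
  have h := H.mul_mul_add_mul_mul (v s) (emb v m w) a
  rw [hanti, H.zero_mul] at h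
  rw [hv.conj_of_pos hs0 (by omega), H.neg_mul, H.mul_neg]
  exact eq_neg_of_add_eq_zero_left h

end IsHypBasis

theorem emb_mul_emb_mul_of_mem_Sph (H : IsAltStarAlg A conj) (hw : w ∈ Sph v m p) (a : A) :
    emb v m w * (emb v m w * a) = -a := by
  rw [H.alt_left, hw.2, H.neg_mul, H.one_mul']

end AlternativeAlgebra

section EmbCLM

variable {A : Type*} [NormedAddCommGroup A] [NormedSpace ℝ A] {v : ℕ → A} {m : ℕ}

/-- The map `emb v m` as a continuous linear map. -/
noncomputable def embCLM (v : ℕ → A) (m : ℕ) : (Fin (m + 1) → ℝ) →L[ℝ] A :=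
  ∑ s : Fin (m + 1), (ContinuousLinearMap.proj s).smulRight (v s)

theorem embCLM_apply (x : Fin (m + 1) → ℝ) : embCLM v m x = emb v m x := by simp [embCLM, emb]

end EmbCLM

section PartialSlice

variable {A : Type*} [NormedAddCommGroup A] [NormedSpace ℝ A] [Mul A] [One A] {conj : A → A}
  {v : ℕ → A} {m p : ℕ} {S : Set (Fin (m + 1) → ℝ)} {W : Set ((Fin (p + 1) → ℝ) × ℝ)}
  {Φ Ψ : (Fin (p + 1) → ℝ) × ℝ → A} {f : (Fin (m + 1) → ℝ) → A} {c : ℝ}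

namespace IsAltStarAlg

/-- The bilinear map `(x, a) ↦ x_q a`. -/
noncomputable def xqMulCLM (H : IsAltStarAlg A conj) (v : ℕ → A) (m p : ℕ) :
    (Fin (m + 1) → ℝ) →L[ℝ] A →L[ℝ] A :=
  H.mulCLM ∘L embCLM v m ∘L xqpartCLM m p

theorem xqMulCLM_apply (H : IsAltStarAlg A conj) (x : Fin (m + 1) → ℝ) (a : A) :
    H.xqMulCLM v m p x a = emb v m (xqpart m p x) * a := by
  rw [← embCLM_apply]
  rfl

theorem xqMulCLM_stdFrame_of_le (H : IsAltStarAlg A conj) {s : Fin (m + 1)} (hs : (s : ℕ) ≤ p) :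
    H.xqMulCLM v m p (stdFrame (m + 1) s) = 0 := by
  ext a
  rw [xqMulCLM_apply, xqpart_stdFrame_of_le hs, ← embCLM_apply, map_zero, H.zero_mul]
  rfl

theorem xqMulCLM_reflP (H : IsAltStarAlg A conj) (x : Fin (m + 1) → ℝ) :
    H.xqMulCLM v m p (reflP m p x) = -H.xqMulCLM v m p x := by
  ext a
  rw [xqMulCLM_apply, xqpart_reflP, ← embCLM_apply, map_neg, H.neg_mul, embCLM_apply,
    ← xqMulCLM_apply]
  rfl

theorem emb_normq_mul_rad_smul (H : IsAltStarAlg A conj) (x : Fin (m + 1) → ℝ) (a : A) :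
    emb v m (normq m p x) * (rad m p x • a) = H.xqMulCLM v m p x a := by
  rw [xqMulCLM_apply, ← rad_smul_normq, ← embCLM_apply, ← embCLM_apply, map_smul, H.smul_mul',
    H.mul_smul']

theorem memGS_of_eqOn_smul_axialFun (H : IsAltStarAlg A conj)
    (hf : Set.EqOn f (fun x => c • axialFun (H.xqMulCLM v m p) Φ Ψ x) S) : MemGS v m p S f := by
  refine ⟨fun z => c • Φ (z.1, z.2 ^ 2), fun z => z.2 • c • Ψ (z.1, z.2 ^ 2),
    fun z => by simp [reflD], fun x hx => ?_⟩
  simp only [hf hx, rad_sq, H.emb_normq_mul_rad_smul, map_smul, ← smul_add]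
  rfl

theorem eqOn_PE_of_eqOn_smul_axialFun (H : IsAltStarAlg A conj)
    (hf : Set.EqOn f (fun x => c • axialFun (H.xqMulCLM v m p) Φ Ψ x) (axialCoord m p ⁻¹' W)) :
    Set.EqOn (PE m p f) (fun x => c • axialFun (H.xqMulCLM v m p) Φ 0 x)
      (axialCoord m p ⁻¹' W) := fun x hx => by
  have hrefl : reflP m p x ∈ axialCoord m p ⁻¹' W := by rwa [Set.mem_preimage, axialCoord_reflP]
  simp only [PE, hf hx, hf hrefl, axialFun, axialCoord_reflP, H.xqMulCLM_reflP, neg_apply,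
    Pi.zero_apply, map_zero]
  module

theorem eqOn_PO_of_eqOn_smul_axialFun (H : IsAltStarAlg A conj)
    (hf : Set.EqOn f (fun x => c • axialFun (H.xqMulCLM v m p) Φ Ψ x) (axialCoord m p ⁻¹' W)) :
    Set.EqOn (PO m p f) (fun x => c • axialFun (H.xqMulCLM v m p) 0 Ψ x)
      (axialCoord m p ⁻¹' W) := fun x hx => by
  have hrefl : reflP m p x ∈ axialCoord m p ⁻¹' W := by rwa [Set.mem_preimage, axialCoord_reflP]
  simp only [PO, hf hx, hf hrefl, axialFun, axialCoord_reflP, H.xqMulCLM_reflP, neg_apply,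
    Pi.zero_apply]
  module

end IsAltStarAlg

end PartialSlice

section CauchyKovalevskaya

variable {A : Type*} [NormedAddCommGroup A] [NormedSpace ℝ A] [Mul A] [One A] {conj : A → A}
  {v : ℕ → A} {m p : ℕ} {f₀ : (Fin (p + 1) → ℝ) → A} {z : (Fin (p + 1) → ℝ) × ℝ}

/-- The even half of the CK-extension, in the coordinates `(x_p, t)`. -/
noncomputable def ckEven (p : ℕ) (f₀ : (Fin (p + 1) → ℝ) → A) : (Fin (p + 1) → ℝ) × ℝ → A :=
  lapSeries cosCoeff (stdFrame (p + 1)) f₀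

/-- The odd half of the CK-extension divided by `x_q`, in the coordinates `(x_p, t)`. -/
noncomputable def ckOdd (v : ℕ → A) (p : ℕ) (f₀ : (Fin (p + 1) → ℝ) → A) :
    (Fin (p + 1) → ℝ) × ℝ → A :=
  lapSeries sinCoeff (stdFrame (p + 1)) (DopP v p f₀)

namespace IsAltStarAlg

theorem completeSpace (H : IsAltStarAlg A conj) : CompleteSpace A :=
  have := H.finDim
  FiniteDimensional.complete ℝ A

theorem DopP_eq_diracAlong (H : IsAltStarAlg A conj) :
    DopP v p f₀ = diracAlong (fun s : Fin (p + 1) => H.mulCLM (v s)) (stdFrame (p + 1)) f₀ :=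
  rfl

theorem lapDomain_subset_DopP (H : IsAltStarAlg A conj) :
    lapDomain (stdFrame (p + 1)) f₀ ⊆ lapDomain (stdFrame (p + 1)) (DopP v p f₀) := by
  rw [H.DopP_eq_diracAlong]
  exact lapDomain_subset_diracAlong _ _

theorem CKe_eq_axialFun (H : IsAltStarAlg A conj) :
    CKe v m p f₀ = axialFun (H.xqMulCLM v m p) (ckEven p f₀) (ckOdd v p f₀) := by
  have := H.finDim
  funext x
  rw [CKe, axialFun, ← H.emb_normq_mul_rad_smul, ckOdd, lapSeries, ← tsum_const_smul'']
  congr 1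
  · refine tsum_congr fun k => ?_
    rw [← rad_sq, ← pow_mul, cosCoeff, div_mul_eq_mul_div]
    rfl
  · refine congrArg _ (tsum_congr fun k => ?_)
    rw [smul_smul, ← rad_sq, ← pow_mul, sinCoeff, div_mul_eq_mul_div, mul_div_assoc', pow_succ]
    congr 2
    ring

theorem contDiffOn_ckEven (H : IsAltStarAlg A conj) :
    ContDiffOn ℝ ∞ (ckEven p f₀) (lapDomain (stdFrame (p + 1)) f₀) :=
  have := H.completeSpace
  contDiffOn_lapSeries hasFactorialDecay_cosCoeff

theorem contDiffOn_ckOdd (H : IsAltStarAlg A conj) :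
    ContDiffOn ℝ ∞ (ckOdd v p f₀) (lapDomain (stdFrame (p + 1)) f₀) :=
  have := H.completeSpace
  (contDiffOn_lapSeries hasFactorialDecay_sinCoeff).mono H.lapDomain_subset_DopP

theorem radialLaplacian_ckEven (H : IsAltStarAlg A conj) :
    Set.EqOn (radialLaplacian (stdFrame (p + 1)) 2 (ckEven p f₀)) 0
      (lapDomain (stdFrame (p + 1)) f₀) := fun _ hz =>
  have := H.completeSpace
  radialLaplacian_lapSeries hasFactorialDecay_cosCoeff cosCoeff_rec hz

theorem radialLaplacian_ckOdd (H : IsAltStarAlg A conj) :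
    Set.EqOn (radialLaplacian (stdFrame (p + 1)) 6 (ckOdd v p f₀)) 0
      (lapDomain (stdFrame (p + 1)) f₀) := fun _ hz =>
  have := H.completeSpace
  radialLaplacian_lapSeries hasFactorialDecay_sinCoeff sinCoeff_rec (H.lapDomain_subset_DopP hz)

theorem diracAlong_ckEven (H : IsAltStarAlg A conj) (hz : z ∈ lapDomain (stdFrame (p + 1)) f₀) :
    diracAlong (fun s : Fin (p + 1) => H.mulCLM (v s)) (fun s => (stdFrame (p + 1) s, 0))
        (ckEven p f₀) z =
      ckOdd v p f₀ z + (2 * z.2) • dirDeriv (0, 1) (ckOdd v p f₀) z :=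
  have := H.completeSpace
  diracAlong_lapSeries_cosCoeff _ hz

end IsAltStarAlg

theorem IsHypBasis.two_smul_dirDeriv_ckEven (H : IsAltStarAlg A conj) (hv : IsHypBasis A conj v m)
    (hp : p < m) (hz : z ∈ lapDomain (stdFrame (p + 1)) f₀) :
    (2 : ℝ) • dirDeriv (0, 1) (ckEven p f₀) z =
      -diracAlong (fun s : Fin (p + 1) => H.mulCLM (conj (v s)))
        (fun s => (stdFrame (p + 1) s, 0)) (ckOdd v p f₀) z :=
  have := H.completeSpace
  two_smul_dirDeriv_lapSeries_cosCoeff (J := fun s : Fin (p + 1) => H.mulCLM (v s))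
    (fun s t a => by
      simpa only [H.mulCLM_apply, Fin.ext_iff] using
        hv.conj_mul_mul_add_conj_mul_mul H (by omega : (s : ℕ) ≤ m) (by omega : (t : ℕ) ≤ m) a) hz

end CauchyKovalevskaya

section BalancedSets

variable {E X : Type*} [TopologicalSpace X]

theorem isConnected_of_joinedIn_image [TopologicalSpace E] {Ω₀ : Set E} {S : Set X} {ι : E → X}
    (hΩ₀ : IsConnected Ω₀) (hι : Continuous ι) (hιS : Set.MapsTo ι Ω₀ S)
    (hS : ∀ x ∈ S, ∃ y ∈ Ω₀, JoinedIn S (ι y) x) : IsConnected S := by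
  obtain ⟨y₀, hy₀⟩ := hΩ₀.nonempty
  refine ⟨⟨ι y₀, hιS hy₀⟩, isPreconnected_of_forall (ι y₀) fun x hx => ?_⟩
  obtain ⟨y, hy, γ, hγ⟩ := hS x hx
  exact ⟨ι '' Ω₀ ∪ Set.range γ,
    Set.union_subset hιS.image_subset (Set.range_subset_iff.2 hγ),
    Or.inl ⟨y₀, hy₀, rfl⟩, Or.inr ⟨1, γ.target⟩,
    (hΩ₀.isPreconnected.image ι hι.continuousOn).union (ι y) ⟨y, hy, rfl⟩ ⟨0, γ.source⟩
      (isPreconnected_range γ.continuous)⟩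

/-- `W ⊆ E × ℝ` lies over `Ω₀`, contains `Ω₀ × {0}`, and each of its fibres is an interval
symmetric about `0`. -/
structure IsBalancedOver (Ω₀ : Set E) (W : Set (E × ℝ)) : Prop where
  mk_zero_mem : ∀ y ∈ Ω₀, (y, 0) ∈ W
  fst_mem : ∀ z ∈ W, z.1 ∈ Ω₀
  mk_mem_of_abs_le : ∀ {y s t}, (y, t) ∈ W → |s| ≤ |t| → (y, s) ∈ W

namespace IsBalancedOver

variable {Ω₀ : Set E} {W : Set (E × ℝ)}

theorem mk_sq_mul_mem (h : IsBalancedOver Ω₀ W) {y : E} {t τ : ℝ} (hy : (y, t) ∈ W)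
    (hτ : τ ∈ Set.Icc (0 : ℝ) 1) : (y, τ ^ 2 * t) ∈ W := by
  refine h.mk_mem_of_abs_le hy ?_
  rw [abs_mul, abs_of_nonneg (sq_nonneg τ)]
  exact mul_le_of_le_one_left (abs_nonneg t) (pow_le_one₀ hτ.1 hτ.2)

theorem isConnected_setOf_mk_sq_mem [TopologicalSpace E] (h : IsBalancedOver Ω₀ W)
    (hΩ₀ : IsConnected Ω₀) : IsConnected {z : E × ℝ | (z.1, z.2 ^ 2) ∈ W} := by
  refine isConnected_of_joinedIn_image (ι := fun y => (y, 0)) hΩ₀ (by fun_prop)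
    (fun y hy => by simpa using h.mk_zero_mem y hy) fun z hz =>
      ⟨z.1, h.fst_mem (z.1, z.2 ^ 2) hz, ?_⟩
  refine JoinedIn.ofLine (f := fun τ => (z.1, τ * z.2)) (by fun_prop) (by simp) (by simp) ?_
  rintro _ ⟨τ, hτ, rfl⟩
  simpa only [Set.mem_ofPred_eq, mul_pow] using h.mk_sq_mul_mem hz hτ

end IsBalancedOver

theorem isBalancedOver_lapDomain_inter {ι F : Type*} [Fintype ι] [NormedAddCommGroup E]
    [NormedSpace ℝ E] [NormedAddCommGroup F] [NormedSpace ℝ F] [CompleteSpace F] {Ω₀ : Set E}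
    {g : E → F} (hg : AnalyticOnNhd ℝ g Ω₀) (e : ι → E) :
    IsBalancedOver Ω₀ (lapDomain e g ∩ Prod.fst ⁻¹' Ω₀) where
  mk_zero_mem y hy := ⟨mk_zero_mem_lapDomain (hg y hy), hy⟩
  fst_mem _ hz := hz.2
  mk_mem_of_abs_le hz hst := ⟨lapDomain_balanced hz.1 hst, hz.2⟩

end BalancedSets

section SliceGeometry

variable {m p : ℕ} {w x : Fin (m + 1) → ℝ} {Ω₀ : Set (Fin (p + 1) → ℝ)}
  {W : Set ((Fin (p + 1) → ℝ) × ℝ)}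

theorem continuous_injP : Continuous (injP m p) := by
  refine continuous_pi fun s => ?_
  by_cases h : (s : ℕ) < p + 1
  · simpa only [injP, h, dif_pos] using continuous_apply _
  · simpa only [injP, h, dif_neg, not_false_iff] using continuous_const

theorem injP_projP (x : Fin (m + 1) → ℝ) : injP m p (projP m p x) = xppart m p x := by
  funext s
  have hs : ¬ m < (s : ℕ) := by omega
  by_cases h : (s : ℕ) ≤ p <;> simp [injP, xppart, projP, h, hs]

theorem pt_projP_xqpart (x : Fin (m + 1) → ℝ) :
    pt m p (xqpart m p x) (projP m p x) 1 = x := by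
  rw [pt, injP_projP, one_smul]
  funext s
  by_cases h : (s : ℕ) ≤ p <;> simp [xppart, xqpart, h]

theorem xqpart_pt (hw : ∀ s : Fin (m + 1), (s : ℕ) ≤ p → w s = 0) (y : Fin (p + 1) → ℝ) (r : ℝ) :
    xqpart m p (pt m p w y r) = r • w := by
  funext s
  by_cases h : (s : ℕ) ≤ p
  · simp [xqpart, h, hw s h]
  · simp [xqpart, pt, injP, h]

theorem projP_pt (hp : p < m) (hw : ∀ s : Fin (m + 1), (s : ℕ) ≤ p → w s = 0)
    (y : Fin (p + 1) → ℝ) (r : ℝ) : projP m p (pt m p w y r) = y := by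
  funext s
  have hs : (s : ℕ) < m + 1 := by omega
  have hsp : (s : ℕ) ≤ p := by omega
  simp [projP, pt, injP, hs, hw ⟨s, hs⟩ hsp, hsp.not_gt]

theorem axialCoord_pt (hp : p < m) (hw : ∀ s : Fin (m + 1), (s : ℕ) ≤ p → w s = 0)
    (y : Fin (p + 1) → ℝ) (r : ℝ) :
    axialCoord m p (pt m p w y r) = (y, r ^ 2 * ∑ s, w s ^ 2) := by
  simp [axialCoord, xqpart_pt hw, projP_pt hp hw, mul_pow, Finset.mul_sum]

theorem pt_zero_right (w : Fin (m + 1) → ℝ) (y : Fin (p + 1) → ℝ) :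
    pt m p w y 0 = injP m p y := by
  rw [pt, zero_smul, add_zero]

theorem axialCoord_injP (hp : p < m) (y : Fin (p + 1) → ℝ) :
    axialCoord m p (injP m p y) = (y, 0) := by
  simpa [pt_zero_right] using axialCoord_pt (w := 0) hp (fun _ _ => rfl) y 0

theorem IsBalancedOver.isConnected_preimage_axialCoord (h : IsBalancedOver Ω₀ W) (hp : p < m)
    (hΩ₀ : IsConnected Ω₀) : IsConnected (axialCoord m p ⁻¹' W) := by
  refine isConnected_of_joinedIn_image (ι := injP m p) hΩ₀ continuous_injP
    (fun y hy => by simpa [axialCoord_injP hp] using h.mk_zero_mem y hy) fun x hx =>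
      ⟨projP m p x, h.fst_mem _ hx, ?_⟩
  refine JoinedIn.ofLine (f := pt m p (xqpart m p x) (projP m p x)) ?_ (pt_zero_right _ _)
    (pt_projP_xqpart x) ?_
  · exact (continuous_const.add (continuous_id.smul continuous_const)).continuousOn
  · rintro _ ⟨τ, hτ, rfl⟩
    rw [Set.mem_preimage, axialCoord_pt hp fun s => xqpart_eq_zero_of_le]
    exact h.mk_sq_mul_mem hx hτ

end SliceGeometry

section SliceRegularity

variable {A : Type*} [NormedAddCommGroup A] [NormedSpace ℝ A] [Mul A] [One A] {conj : A → A}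
  {v : ℕ → A} {m p : ℕ} {w : Fin (m + 1) → ℝ} {Ω₀ : Set (Fin (p + 1) → ℝ)}
  {W : Set ((Fin (p + 1) → ℝ) × ℝ)} {Φ Ψ : (Fin (p + 1) → ℝ) × ℝ → A}

namespace IsHypBasis

theorem axialCoord_pt_of_mem_Sph (H : IsAltStarAlg A conj) (hv : IsHypBasis A conj v m)
    (hp : p < m) (hw : w ∈ Sph v m p) (y : Fin (p + 1) → ℝ) (r : ℝ) :
    axialCoord m p (pt m p w y r) = (y, r ^ 2) := by
  rw [axialCoord_pt hp hw.1, hv.sum_sq_of_mem_Sph H hw, mul_one]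

theorem sliceSet_preimage_axialCoord (H : IsAltStarAlg A conj) (hv : IsHypBasis A conj v m)
    (hp : p < m) (hw : w ∈ Sph v m p) :
    sliceSet m p (axialCoord m p ⁻¹' W) w = {z | (z.1, z.2 ^ 2) ∈ W} := by
  ext z
  simp only [sliceSet, Set.mem_ofPred_eq, Set.mem_preimage, hv.axialCoord_pt_of_mem_Sph H hp hw]

theorem sliceFun_axialFun (H : IsAltStarAlg A conj) (hv : IsHypBasis A conj v m) (hp : p < m)
    (hw : w ∈ Sph v m p) :
    sliceFun m p (axialFun (H.xqMulCLM v m p) Φ Ψ) w =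
      fun z => Φ (z.1, z.2 ^ 2) + H.mulCLM (emb v m w) (z.2 • Ψ (z.1, z.2 ^ 2)) := by
  funext z
  rw [sliceFun, axialFun, hv.axialCoord_pt_of_mem_Sph H hp hw, H.xqMulCLM_apply, xqpart_pt hw.1,
    ← embCLM_apply, map_smul, embCLM_apply, H.smul_mul', map_smul, H.mulCLM_apply]

theorem pSym_preimage_axialCoord (H : IsAltStarAlg A conj) (hv : IsHypBasis A conj v m)
    (hp : p < m) : PSym v m p (axialCoord m p ⁻¹' W) := fun x hx w hw => by
  have h := hv.axialCoord_pt_of_mem_Sph H hp hw (projP m p x) (rad m p x)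
  rw [pt, injP_projP, rad_sq] at h
  rw [Set.mem_preimage, h]
  exact hx

theorem sliceDomain_preimage_axialCoord (H : IsAltStarAlg A conj) (hv : IsHypBasis A conj v m)
    (hp : p < m) (hW : IsOpen W) (hΩ₀ : IsConnected Ω₀) (hbal : IsBalancedOver Ω₀ W) :
    SliceDomain v m p (axialCoord m p ⁻¹' W) := by
  refine ⟨isOpen_preimage_axialCoord hW, hbal.isConnected_preimage_axialCoord hp hΩ₀, ?_,
    fun w hw => ?_⟩
  · obtain ⟨y, hy⟩ := hΩ₀.nonempty
    refine ⟨injP m p y, by simpa [axialCoord_injP hp] using hbal.mk_zero_mem y hy, ?_⟩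
    simpa [pt_zero_right] using xqpart_pt (m := m) (w := 0) (fun _ _ => rfl) y 0
  · rw [hv.sliceSet_preimage_axialCoord H hp hw]
    exact hbal.isConnected_setOf_mk_sq_mem hΩ₀

end IsHypBasis

end SliceRegularity

section SquaredRadius

variable {E F G : Type*} [NormedAddCommGroup E] [NormedSpace ℝ E] [NormedAddCommGroup F]
  [NormedSpace ℝ F] [NormedAddCommGroup G] [NormedSpace ℝ G] {Φ : E × ℝ → G} {Ψ : E × ℝ → F}
  {z : E × ℝ}

theorem dirDeriv_comp_mk_sq (hΦ : DifferentiableAt ℝ Φ (z.1, z.2 ^ 2)) (a : E × ℝ) :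
    dirDeriv a (fun z => Φ (z.1, z.2 ^ 2)) z =
      dirDeriv (a.1, 2 * z.2 * a.2) Φ (z.1, z.2 ^ 2) := by
  have hsq : HasFDerivAt (fun z : E × ℝ => (z.1, z.2 ^ 2))
      ((ContinuousLinearMap.fst ℝ E ℝ).prod ((2 * z.2) • ContinuousLinearMap.snd ℝ E ℝ)) z :=
    hasFDerivAt_fst.prodMk (by simpa using (hasFDerivAt_snd (𝕜 := ℝ) (p := z)).pow 2)
  have h : HasFDerivAt (fun z : E × ℝ => Φ (z.1, z.2 ^ 2)) _ z :=
    HasFDerivAt.comp z hΦ.hasFDerivAt hsq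
  rw [dirDeriv, h.fderiv]
  rfl

theorem differentiableAt_comp_mk_sq (hΦ : DifferentiableAt ℝ Φ (z.1, z.2 ^ 2)) :
    DifferentiableAt ℝ (fun z : E × ℝ => Φ (z.1, z.2 ^ 2)) z :=
  hΦ.comp z (by fun_prop)

theorem dirDeriv_comp_mk_sq_add_clm_smul (J : F →L[ℝ] G)
    (hΦ : DifferentiableAt ℝ Φ (z.1, z.2 ^ 2)) (hΨ : DifferentiableAt ℝ Ψ (z.1, z.2 ^ 2))
    (a : E × ℝ) :
    dirDeriv a (fun z => Φ (z.1, z.2 ^ 2) + J (z.2 • Ψ (z.1, z.2 ^ 2))) z =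
      dirDeriv (a.1, 2 * z.2 * a.2) Φ (z.1, z.2 ^ 2) +
        J (z.2 • dirDeriv (a.1, 2 * z.2 * a.2) Ψ (z.1, z.2 ^ 2) + a.2 • Ψ (z.1, z.2 ^ 2)) := by
  have hΨ' := differentiableAt_comp_mk_sq hΨ
  have hmul : DifferentiableAt ℝ (fun z : E × ℝ => z.2 • Ψ (z.1, z.2 ^ 2)) z :=
    differentiableAt_snd.fun_smul hΨ'
  have hJ : DifferentiableAt ℝ (fun z : E × ℝ => J (z.2 • Ψ (z.1, z.2 ^ 2))) z :=
    J.differentiableAt.comp z hmul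
  rw [dirDeriv_add_apply (differentiableAt_comp_mk_sq hΦ) hJ,
    dirDeriv_clm_apply J hmul, dirDeriv_smul_apply differentiableAt_snd hΨ',
    dirDeriv_comp_mk_sq hΦ, dirDeriv_comp_mk_sq hΨ]
  simp [dirDeriv, fderiv_snd]

theorem dirDeriv_base_comp_mk_sq_add_clm_smul (J : F →L[ℝ] G)
    (hΦ : DifferentiableAt ℝ Φ (z.1, z.2 ^ 2)) (hΨ : DifferentiableAt ℝ Ψ (z.1, z.2 ^ 2)) (a : E) :
    dirDeriv (a, 0) (fun z => Φ (z.1, z.2 ^ 2) + J (z.2 • Ψ (z.1, z.2 ^ 2))) z =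
      dirDeriv (a, 0) Φ (z.1, z.2 ^ 2) + J (z.2 • dirDeriv (a, 0) Ψ (z.1, z.2 ^ 2)) := by
  simpa using dirDeriv_comp_mk_sq_add_clm_smul J hΦ hΨ (a, 0)

theorem dirDeriv_vert_comp_mk_sq_add_clm_smul (J : F →L[ℝ] G)
    (hΦ : DifferentiableAt ℝ Φ (z.1, z.2 ^ 2)) (hΨ : DifferentiableAt ℝ Ψ (z.1, z.2 ^ 2)) :
    dirDeriv (0, 1) (fun z => Φ (z.1, z.2 ^ 2) + J (z.2 • Ψ (z.1, z.2 ^ 2))) z =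
      z.2 • (2 : ℝ) • dirDeriv (0, 1) Φ (z.1, z.2 ^ 2) +
        J (Ψ (z.1, z.2 ^ 2) + (2 * z.2 ^ 2) • dirDeriv (0, 1) Ψ (z.1, z.2 ^ 2)) := by
  have hvert : ((0, 2 * z.2 * 1) : E × ℝ) = (2 * z.2) • (0, 1) := by simp
  rw [dirDeriv_comp_mk_sq_add_clm_smul J hΦ hΨ, hvert]
  simp only [dirDeriv, map_smul, smul_smul, one_smul, add_comm (Ψ _)]
  ring_nf

end SquaredRadius

section PartialSliceMonogenic

variable {A : Type*} [NormedAddCommGroup A] [NormedSpace ℝ A] [Mul A] [One A] {conj : A → A}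
  {v : ℕ → A} {m p : ℕ} {w : Fin (m + 1) → ℝ} {W : Set ((Fin (p + 1) → ℝ) × ℝ)}
  {Φ Ψ : (Fin (p + 1) → ℝ) × ℝ → A}

namespace IsHypBasis

theorem mul_pdSx_comp_mk_sq (H : IsAltStarAlg A conj) (hv : IsHypBasis A conj v m)
    (hp : p < m) (hw : w ∈ Sph v m p) {z : (Fin (p + 1) → ℝ) × ℝ}
    (hΦ : DifferentiableAt ℝ Φ (z.1, z.2 ^ 2)) (hΨ : DifferentiableAt ℝ Ψ (z.1, z.2 ^ 2))
    (s : Fin (p + 1)) :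
    v s * pdSx p s
      (fun z => Φ (z.1, z.2 ^ 2) + H.mulCLM (emb v m w) (z.2 • Ψ (z.1, z.2 ^ 2))) z =
      H.mulCLM (v s) (dirDeriv (stdFrame (p + 1) s, 0) Φ (z.1, z.2 ^ 2)) +
        H.mulCLM (emb v m w) (z.2 • H.mulCLM (conj (v s))
          (dirDeriv (stdFrame (p + 1) s, 0) Ψ (z.1, z.2 ^ 2))) := by
  have hs := dirDeriv_base_comp_mk_sq_add_clm_smul (H.mulCLM (emb v m w)) hΦ hΨ
    (stdFrame (p + 1) s)
  rw [← H.mulCLM_apply]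
  refine (congrArg (H.mulCLM (v s)) hs).trans ?_
  rw [map_add, ← map_smul (H.mulCLM (conj (v s)))]
  simp only [H.mulCLM_apply]
  rw [hv.mul_emb_mul_of_mem_Sph H hp hw (Nat.lt_succ_iff.1 s.isLt)]

theorem domCR_comp_mk_sq_eq_zero (H : IsAltStarAlg A conj) (hv : IsHypBasis A conj v m)
    (hp : p < m) (hw : w ∈ Sph v m p) {z : (Fin (p + 1) → ℝ) × ℝ}
    (hΦ : DifferentiableAt ℝ Φ (z.1, z.2 ^ 2)) (hΨ : DifferentiableAt ℝ Ψ (z.1, z.2 ^ 2))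
    (hΦΨ : diracAlong (fun s : Fin (p + 1) => H.mulCLM (v s)) (fun s => (stdFrame (p + 1) s, 0)) Φ
      (z.1, z.2 ^ 2) = Ψ (z.1, z.2 ^ 2) + (2 * z.2 ^ 2) • dirDeriv (0, 1) Ψ (z.1, z.2 ^ 2))
    (hΨΦ : (2 : ℝ) • dirDeriv (0, 1) Φ (z.1, z.2 ^ 2) =
      -diracAlong (fun s : Fin (p + 1) => H.mulCLM (conj (v s)))
        (fun s => (stdFrame (p + 1) s, 0)) Ψ (z.1, z.2 ^ 2)) :
    DomCR v m p w
      (fun z => Φ (z.1, z.2 ^ 2) + H.mulCLM (emb v m w) (z.2 • Ψ (z.1, z.2 ^ 2))) z = 0 := by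
  rw [diracAlong] at hΦΨ hΨΦ
  have hvert := dirDeriv_vert_comp_mk_sq_add_clm_smul (H.mulCLM (emb v m w)) hΦ hΨ
  have hww (a : A) : H.mulCLM (emb v m w) (H.mulCLM (emb v m w) a) = -a := by
    simpa only [H.mulCLM_apply] using emb_mul_emb_mul_of_mem_Sph H hw a
  rw [DomCR, DopSx, Finset.sum_congr rfl fun s _ => hv.mul_pdSx_comp_mk_sq H hp hw hΦ hΨ s,
    Finset.sum_add_distrib, hΦΨ, ← map_sum, ← Finset.smul_sum, ← H.mulCLM_apply,
    show pdSr p _ z = _ from hvert, map_add (H.mulCLM (emb v m w)) (z.2 • _), hww, hΨΦ, smul_neg,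
    map_neg]
  abel

theorem gsm_axialFun (H : IsAltStarAlg A conj) (hv : IsHypBasis A conj v m) (hp : p < m)
    (hW : IsOpen W) (hΦ : ContDiffOn ℝ ∞ Φ W) (hΨ : ContDiffOn ℝ ∞ Ψ W)
    (hΦΨ : ∀ ζ ∈ W, diracAlong (fun s : Fin (p + 1) => H.mulCLM (v s))
      (fun s => (stdFrame (p + 1) s, 0)) Φ ζ = Ψ ζ + (2 * ζ.2) • dirDeriv (0, 1) Ψ ζ)
    (hΨΦ : ∀ ζ ∈ W, (2 : ℝ) • dirDeriv (0, 1) Φ ζ =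
      -diracAlong (fun s : Fin (p + 1) => H.mulCLM (conj (v s)))
        (fun s => (stdFrame (p + 1) s, 0)) Ψ ζ) :
    GSM v m p (axialFun (H.xqMulCLM v m p) Φ Ψ) (axialCoord m p ⁻¹' W) := fun w hw => by
  rw [hv.sliceSet_preimage_axialCoord H hp hw, hv.sliceFun_axialFun H hp hw]
  refine ⟨?_, fun z hz => hv.domCR_comp_mk_sq_eq_zero H hp hw
    (differentiableAt_of_contDiffOn_infty hW hΦ hz) (differentiableAt_of_contDiffOn_infty hW hΨ hz)
    (hΦΨ _ hz) (hΨΦ _ hz)⟩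
  have hsq : ContDiff ℝ ∞ fun z : (Fin (p + 1) → ℝ) × ℝ => (z.1, z.2 ^ 2) := by fun_prop
  have hΦ' := hΦ.comp (s := {z | (z.1, z.2 ^ 2) ∈ W}) hsq.contDiffOn (Set.mapsTo_preimage _ W)
  have hΨ' := hΨ.comp (s := {z | (z.1, z.2 ^ 2) ∈ W}) hsq.contDiffOn (Set.mapsTo_preimage _ W)
  exact (hΦ'.add ((H.mulCLM (emb v m w)).contDiff.comp_contDiffOn
    (contDiff_snd.contDiffOn.smul hΨ'))).of_le ENat.LEInfty.out

end IsHypBasis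

end PartialSliceMonogenic

section CKExtension

variable {A : Type*} [NormedAddCommGroup A] [NormedSpace ℝ A] [Mul A] [One A] {conj : A → A}
  {v : ℕ → A} {m p n : ℕ} {f₀ : (Fin (p + 1) → ℝ) → A} {W : Set ((Fin (p + 1) → ℝ) × ℝ)}

theorem IsHypBasis.gsm_CKe (H : IsAltStarAlg A conj) (hv : IsHypBasis A conj v m) (hp : p < m)
    (hW : IsOpen W) (hWf : W ⊆ lapDomain (stdFrame (p + 1)) f₀) :
    GSM v m p (CKe v m p f₀) (axialCoord m p ⁻¹' W) := by
  rw [H.CKe_eq_axialFun]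
  exact hv.gsm_axialFun H hp hW (H.contDiffOn_ckEven.mono hWf) (H.contDiffOn_ckOdd.mono hWf)
    (fun _ hζ => H.diracAlong_ckEven (hWf hζ))
    fun _ hζ => hv.two_smul_dirDeriv_ckEven H hp (hWf hζ)

namespace IsAltStarAlg

theorem eqOn_lapIterF_CKe (H : IsAltStarAlg A conj) (hp : p < m) (hW : IsOpen W)
    (hWf : W ⊆ lapDomain (stdFrame (p + 1)) f₀) (k : ℕ) :
    Set.EqOn (lapIterF m k (CKe v m p f₀))
      (fun x => (∏ j ∈ Finset.range k, (2 * (m - p : ℕ) - (2 + 4 * j) : ℝ)) •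
        axialFun (H.xqMulCLM v m p) ((dirDeriv (0, 1))^[k] (ckEven p f₀))
          ((dirDeriv (0, 1))^[k] (ckOdd v p f₀)) x) (axialCoord m p ⁻¹' W) := by
  rw [H.CKe_eq_axialFun]
  exact iterate_laplaceAlong_axialFun hp (fun _ => H.xqMulCLM_stdFrame_of_le) hW
    (H.contDiffOn_ckEven.mono hWf) (H.contDiffOn_ckOdd.mono hWf) (H.radialLaplacian_ckEven.mono hWf)
    (by norm_num; exact H.radialLaplacian_ckOdd.mono hWf) k

theorem harmonic_PE_lapIterF_CKe (H : IsAltStarAlg A conj) (hp : p < m) (hq : m - p = 2 * n + 1)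
    (hW : IsOpen W) (hWf : W ⊆ lapDomain (stdFrame (p + 1)) f₀) :
    Harmonic m (PE m p (lapIterF m n (CKe v m p f₀))) (axialCoord m p ⁻¹' W) := by
  have hα : (2 * (m - p : ℕ) : ℝ) = 2 + 4 * n := by rw [hq]; push_cast; ring
  have hsmooth := H.contDiffOn_ckEven.mono hWf
  refine harmonic_of_eqOn_smul_axialFun hp (fun _ => H.xqMulCLM_stdFrame_of_le) hW
    (contDiffOn_iterate_dirDeriv hW hsmooth (0, 1) n) contDiffOn_const ?_ ?_
    (H.eqOn_PE_of_eqOn_smul_axialFun (H.eqOn_lapIterF_CKe hp hW hWf n))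
  · rw [hα]
    exact radialLaplacian_iterate_dirDeriv_eq_zero hW hsmooth (H.radialLaplacian_ckEven.mono hWf) n
  · exact fun ζ _ => congrFun (radialLaplacian_zero _ _) ζ

theorem harmonic_PO_lapIterF_CKe (H : IsAltStarAlg A conj) (hp : p < m) (hq : m - p = 2 * n + 1)
    (hW : IsOpen W) (hWf : W ⊆ lapDomain (stdFrame (p + 1)) f₀) :
    Harmonic m (PO m p (lapIterF m n (CKe v m p f₀))) (axialCoord m p ⁻¹' W) := by
  have hα : (2 * (m - p : ℕ) + 4 : ℝ) = 6 + 4 * n := by rw [hq]; push_cast; ring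
  have hsmooth := (H.contDiffOn_ckOdd (v := v)).mono hWf
  refine harmonic_of_eqOn_smul_axialFun hp (fun _ => H.xqMulCLM_stdFrame_of_le) hW
    contDiffOn_const (contDiffOn_iterate_dirDeriv hW hsmooth (0, 1) n) ?_ ?_
    (H.eqOn_PO_of_eqOn_smul_axialFun (H.eqOn_lapIterF_CKe hp hW hWf n))
  · exact fun ζ _ => congrFun (radialLaplacian_zero _ _) ζ
  · rw [hα]
    exact radialLaplacian_iterate_dirDeriv_eq_zero hW hsmooth (H.radialLaplacian_ckOdd.mono hWf) n

end IsAltStarAlg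

end CKExtension

/-- For odd `q` and real analytic `f₀` on a domain `Ω₀ ⊆ ℝ^{p+1}`, the partial even
and odd parts of `Δ_x^{(q-1)/2} CK[f₀]` are harmonic generalized partial-slice
functions on a p-symmetric slice domain `Ω ⊃ Ω₀` on which `CK[f₀]` is defined. -/
theorem pe_po_harmonic
    {A : Type*} [NormedAddCommGroup A] [NormedSpace ℝ A] [Mul A] [One A]
    (conj : A → A) (H : IsAltStarAlg A conj)
    (v : ℕ → A) (m p : ℕ) (hv : IsHypBasis A conj v m) (hp : p < m)
    (hq : Odd (m - p))
    (Ω₀ : Set (Fin (p + 1) → ℝ)) (hΩ₀ : IsOpen Ω₀) (hΩ₀conn : IsConnected Ω₀)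
    (f₀ : (Fin (p + 1) → ℝ) → A) (hf₀ : AnalyticOnNhd ℝ f₀ Ω₀) :
    ∃ Ω : Set (Fin (m + 1) → ℝ),
      PSym v m p Ω ∧ SliceDomain v m p Ω ∧
      injP m p '' Ω₀ ⊆ Ω ∧ Ω ⊆ Omega0star m p Ω₀ ∧
      GSM v m p (CKe v m p f₀) Ω ∧
      Harmonic m (PE m p (lapIterF m ((m - p - 1) / 2) (CKe v m p f₀))) Ω ∧
      Harmonic m (PO m p (lapIterF m ((m - p - 1) / 2) (CKe v m p f₀))) Ω ∧
      MemGS v m p Ω (PE m p (lapIterF m ((m - p - 1) / 2) (CKe v m p f₀))) ∧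
      MemGS v m p Ω (PO m p (lapIterF m ((m - p - 1) / 2) (CKe v m p f₀))) := by
  have := H.completeSpace
  obtain ⟨n, hn⟩ := hq
  have hk : (m - p - 1) / 2 = n := by omega
  set W := lapDomain (stdFrame (p + 1)) f₀ ∩ Prod.fst ⁻¹' Ω₀
  have hW : IsOpen W := isOpen_lapDomain.inter (hΩ₀.preimage continuous_fst)
  have hWf : W ⊆ lapDomain (stdFrame (p + 1)) f₀ := Set.inter_subset_left
  have hbal : IsBalancedOver Ω₀ W := isBalancedOver_lapDomain_inter hf₀ _
  have hlap := H.eqOn_lapIterF_CKe (v := v) hp hW hWf n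
  rw [hk]
  refine ⟨axialCoord m p ⁻¹' W, hv.pSym_preimage_axialCoord H hp,
    hv.sliceDomain_preimage_axialCoord H hp hW hΩ₀conn hbal, ?_, fun x hx => hbal.fst_mem _ hx,
    hv.gsm_CKe H hp hW hWf, H.harmonic_PE_lapIterF_CKe hp hn hW hWf,
    H.harmonic_PO_lapIterF_CKe hp hn hW hWf,
    H.memGS_of_eqOn_smul_axialFun (H.eqOn_PE_of_eqOn_smul_axialFun hlap),
    H.memGS_of_eqOn_smul_axialFun (H.eqOn_PO_of_eqOn_smul_axialFun hlap)⟩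
  rintro _ ⟨y, hy, rfl⟩
  rw [Set.mem_preimage, axialCoord_injP hp]
  exact hbal.mk_zero_mem y hy

end GPSM
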